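/- arXiv:2106.02265 — 4 statements merged into one kernel-verified Lean document; each statement's English description precedes it below -/
import Mathlib

section
/- Let F be a finite field with 5^k elements and G = C_3 × D_10. Then the center of the group V = 1 + J(FG) is an elementary abelian 5-group of order 5^{9k}, i.e., Z(V) ≅ C_5^{9k}. -/
/-!
Let `G = A × D₂ₚ` with `p` an odd prime, `A` finite abelian of order prime to `p`, and `F` of
characteristic `p`; write `ρ` for a generator of the rotations.

The kernel of `FG → F[A × {±1}]` is `FG (ρ - 1)`. All its elements have `p`-th power zero because
`(ρ - 1) ^ p = 0`, and the quotient is semisimple by Maschke's theorem, so this kernel is `J(FG)`.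
Hence `Z(V) = 1 + (J ∩ C(J))`, where `C(J)` is the centralizer of `J`, and `Z(V)` has exponent `p`.

Moreover `C(J)` is the center of `FG`: if `z` commutes with `ρ - 1` and `s (ρ - 1)`, for a
reflection `s`, then the commutator of `z` and `s` is constant on the cosets of `⟨ρ⟩`, each of which
contains an element commuting with `s`, where the commutator vanishes. The center of `FG` has
dimension `|A| (p + 3) / 2`, the number of conjugacy classes. On it the sum over the reflections
`(a, s ρ ^ i)` vanishes, these being conjugate and `p` in number, so that `J ∩ Z(FG)` is cut out by
the `|A|` sums over the rotations `(a, ρ ^ i)` and has dimension `|A| (p + 1) / 2`.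
-/

open scoped MonoidAlgebra
open MonoidAlgebra

theorem exists_mul_pow_eq_mul_pow {M : Type*} [Monoid M] {t : M}
    (ht : ∀ y, ∃ y', t * y = y' * t) (y : M) (n : ℕ) : ∃ y', (y * t) ^ n = y' * t ^ n := by
  induction n with
  | zero => exact ⟨1, by simp⟩
  | succ n ih =>
    obtain ⟨a, ha⟩ := ih
    obtain ⟨b, hb⟩ := ht a
    refine ⟨y * b, ?_⟩
    calc (y * t) ^ (n + 1) = y * (t * a) * t ^ n := by simp only [pow_succ', ha, mul_assoc]
      _ = y * b * t ^ (n + 1) := by simp only [hb, pow_succ', mul_assoc]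

section NilIdeal

variable {R : Type*} [Ring R]

theorem le_jacobson_bot_of_forall_isNilpotent {I : Ideal R} (hI : ∀ z ∈ I, IsNilpotent z) :
    I ≤ Ideal.jacobson ⊥ := by
  intro z hz
  rw [Ideal.mem_jacobson_iff]
  intro y
  obtain ⟨u, hu⟩ := (hI _ (I.mul_mem_left y hz)).isUnit_add_one
  refine ⟨↑u⁻¹, ?_⟩
  have hinv : (↑u⁻¹ : R) * (y * z + 1) = 1 := by rw [← hu, Units.inv_mul]
  rw [Ideal.mem_bot, ← hinv]
  noncomm_ring

/-- The group of units `1 + I`, for a left ideal `I`: the units congruent to `1` modulo `I`. -/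
def oneAddUnits (I : Ideal R) : Subgroup Rˣ where
  carrier := {u | (u : R) - 1 ∈ I}
  one_mem' := by simp
  mul_mem' {u v} hu hv := by
    have hmul : ((u * v : Rˣ) : R) - 1 = u * ((v : R) - 1) + ((u : R) - 1) := by
      push_cast
      noncomm_ring
    rw [Set.mem_ofPred_eq, hmul]
    exact I.add_mem (I.mul_mem_left _ hv) hu
  inv_mem' {u} hu := by
    have hinv : ((u⁻¹ : Rˣ) : R) - 1 = -↑u⁻¹ * ((u : R) - 1) := by
      rw [neg_mul, mul_sub, Units.inv_mul, mul_one, neg_sub]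
    rw [Set.mem_ofPred_eq, hinv]
    exact I.mul_mem_left _ hu

variable {I : Ideal R}

theorem mem_oneAddUnits {u : Rˣ} : u ∈ oneAddUnits I ↔ (u : R) - 1 ∈ I := Iff.rfl

theorem exists_oneAddUnits_val_eq_add_one (hI : ∀ z ∈ I, IsNilpotent z) {z : R} (hz : z ∈ I) :
    ∃ u : oneAddUnits I, ((u : Rˣ) : R) = z + 1 := by
  obtain ⟨u, hu⟩ := (hI z hz).isUnit_add_one
  exact ⟨⟨u, by rwa [mem_oneAddUnits, hu, add_sub_cancel_right]⟩, hu⟩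

theorem commute_sub_one_sub_one_iff {x y : R} : Commute (x - 1) (y - 1) ↔ Commute x y := by
  refine ⟨fun h => ?_, fun h => (h.sub_left (.one_left _)).sub_right (.one_right _)⟩
  simpa using (h.add_left (.one_left _)).add_right (.one_right _)

theorem mem_center_oneAddUnits_iff (hI : ∀ z ∈ I, IsNilpotent z) {u : oneAddUnits I} :
    u ∈ Subgroup.center (oneAddUnits I) ↔
      ((u : Rˣ) : R) - 1 ∈ Set.centralizer (I : Set R) := by
  rw [Subgroup.mem_center_iff, Set.mem_centralizer_iff]
  constructor
  · intro hu z hz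
    obtain ⟨v, hv⟩ := exists_oneAddUnits_val_eq_add_one hI hz
    have hvu : Commute ((v : Rˣ) : R) ((u : Rˣ) : R) :=
      congrArg (fun w : oneAddUnits I => ((w : Rˣ) : R)) (hu v)
    rw [eq_sub_of_add_eq hv.symm]
    exact commute_sub_one_sub_one_iff.2 hvu
  · intro hu v
    exact Subtype.ext (Units.ext (commute_sub_one_sub_one_iff.1 (hu _ v.2)))

theorem natCard_center_oneAddUnits (hI : ∀ z ∈ I, IsNilpotent z) :
    Nat.card (Subgroup.center (oneAddUnits I)) =
      Nat.card ((I : Set R) ∩ Set.centralizer (I : Set R) : Set R) := by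
  refine Nat.card_eq_of_bijective
    (fun u => ⟨((u : oneAddUnits I) : Rˣ) - 1, u.1.2, (mem_center_oneAddUnits_iff hI).1 u.2⟩)
    ⟨fun u v huv => ?_, ?_⟩
  · exact Subtype.ext (Subtype.ext (Units.ext (sub_left_injective (congrArg Subtype.val huv))))
  · rintro ⟨z, hzI, hz⟩
    obtain ⟨u, hu⟩ := exists_oneAddUnits_val_eq_add_one hI hzI
    have hu_sub : ((u : Rˣ) : R) - 1 = z := by rw [hu, add_sub_cancel_right]
    exact ⟨⟨u, (mem_center_oneAddUnits_iff hI).2 (hu_sub ▸ hz)⟩, Subtype.ext hu_sub⟩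

variable {p : ℕ} [Fact p.Prime]

theorem oneAddUnits_pow_char [CharP R p] (hI : ∀ z ∈ I, z ^ p = 0) (u : oneAddUnits I) :
    u ^ p = 1 := by
  refine Subtype.ext (Units.ext (sub_eq_zero.1 ?_))
  have hsub := sub_pow_char_of_commute (p := p) (Commute.one_right ((u : Rˣ) : R))
  rw [hI _ u.2, one_pow] at hsub
  simpa using hsub.symm

theorem nonempty_mulEquiv_pi_multiplicative_zmod {A : Type*} [CommGroup A] {n : ℕ}
    (hpow : ∀ a : A, a ^ p = 1) (hcard : Nat.card A = p ^ n) :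
    Nonempty (A ≃* (Fin n → Multiplicative (ZMod p))) := by
  have hp : p.Prime := Fact.out
  have : Finite A := Nat.finite_of_card_ne_zero (hcard ▸ pow_ne_zero n hp.ne_zero)
  let := AddCommGroup.zmodModule (n := p) fun a : Additive A => hpow a.toMul
  have hfinrank : Module.finrank (ZMod p) (Additive A) = n := by
    have hpow_finrank := Module.natCard_eq_pow_finrank (K := ZMod p) (V := Additive A)
    rw [Nat.card_zmod] at hpow_finrank
    exact Nat.pow_right_injective hp.two_le (hpow_finrank.symm.trans hcard)
  let e : Additive A ≃ₗ[ZMod p] (Fin n → ZMod p) := .ofFinrankEq _ _ (by simp [hfinrank])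
  exact ⟨e.toAddEquiv.toMultiplicativeRight.trans (MulEquiv.funMultiplicative ..)⟩

open scoped IsMulCommutative in
theorem nonempty_center_oneAddUnits_mulEquiv [CharP R p] (hI : ∀ z ∈ I, z ^ p = 0) {n : ℕ}
    (hcard : Nat.card ((I : Set R) ∩ Set.centralizer (I : Set R) : Set R) = p ^ n) :
    Nonempty (Subgroup.center (oneAddUnits I) ≃* (Fin n → Multiplicative (ZMod p))) :=
  nonempty_mulEquiv_pi_multiplicative_zmod (fun u => Subtype.ext (oneAddUnits_pow_char hI u.1))
    ((natCard_center_oneAddUnits fun z hz => ⟨p, hI z hz⟩).trans hcard)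

end NilIdeal

theorem charP_monoidAlgebra (F G : Type*) [CommRing F] [Monoid G] (p : ℕ) [CharP F p] :
    CharP F[G] p :=
  charP_of_injective_algebraMap single_right_injective p

section CyclicKernel

variable {F G Q : Type*} [CommRing F] [Group G] [Group Q] {g : G}

theorem of_sub_one_mem_span_of_mem_zpowers {x : G} (hx : x ∈ Subgroup.zpowers g) :
    of F G x - 1 ∈ Ideal.span {of F G g - 1} := by
  let V := (oneAddUnits (Ideal.span {of F G g - 1})).comap (of F G).toHomUnits
  have hgV : g ∈ V := Ideal.mem_span_singleton_self (of F G g - 1)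
  exact Subgroup.zpowers_le.2 hgV hx

variable {φ : G →* Q}

theorem sub_mapDomain_invFun_mapDomain_mem_span (hker : φ.ker = Subgroup.zpowers g) (z : F[G]) :
    z - mapDomain (Function.invFun φ) (mapDomain φ z) ∈ Ideal.span {of F G g - 1} := by
  induction z using MonoidAlgebra.induction_linear with
  | zero => simp
  | add z w hz hw =>
    rw [mapDomain_add, mapDomain_add, add_sub_add_comm]
    exact Ideal.add_mem _ hz hw
  | single h a =>
    set h' := Function.invFun φ (φ h)
    have hφ : φ h' = φ h := Function.invFun_eq ⟨h, rfl⟩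
    have hmem : h'⁻¹ * h ∈ Subgroup.zpowers g := by
      rw [← hker, MonoidHom.mem_ker, map_mul, map_inv, hφ, inv_mul_cancel]
    have hfactor : single h a - mapDomain (Function.invFun φ) (mapDomain φ (single h a)) =
        single h' a * (of F G (h'⁻¹ * h) - 1) := by
      simp [h', mul_sub, single_mul_single]
    rw [hfactor]
    exact Ideal.mul_mem_left _ _ (of_sub_one_mem_span_of_mem_zpowers hmem)

theorem ker_mapDomainRingHom_eq_span (hker : φ.ker = Subgroup.zpowers g) :
    RingHom.ker (mapDomainRingHom F φ) = Ideal.span {of F G g - 1} := by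
  refine le_antisymm (fun z hz => ?_) ?_
  · have hmap : mapDomain φ z = 0 := hz
    simpa [hmap] using sub_mapDomain_invFun_mapDomain_mem_span (F := F) hker z
  · have hg : φ g = 1 := φ.mem_ker.1 (hker ▸ Subgroup.mem_zpowers g)
    rw [Ideal.span_singleton_le_iff_mem, RingHom.mem_ker, map_sub, map_one, sub_eq_zero]
    simp [hg, one_def]

variable {p n : ℕ} [Fact p.Prime] [CharP F p]

theorem pow_eq_zero_of_mem_ker_mapDomainRingHom (hker : φ.ker = Subgroup.zpowers g)
    (hg : g ^ p ^ n = 1) {z : F[G]} (hz : z ∈ RingHom.ker (mapDomainRingHom F φ)) :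
    z ^ p ^ n = 0 := by
  have hspan := ker_mapDomainRingHom_eq_span (F := F) hker
  have hnormal (y : F[G]) : ∃ y', (of F G g - 1) * y = y' * (of F G g - 1) := by
    have hmem : (of F G g - 1) * y ∈ RingHom.ker (mapDomainRingHom F φ) :=
      Ideal.mul_mem_right _ _ (hspan ▸ Ideal.mem_span_singleton_self _)
    rw [hspan, Ideal.mem_span_singleton'] at hmem
    exact hmem.imp fun _ => Eq.symm
  have := charP_monoidAlgebra F G p
  have hpow : (of F G g - 1) ^ p ^ n = 0 := by
    rw [sub_pow_char_pow_of_commute p n (Commute.one_right _), ← map_pow, hg, map_one, one_pow,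
      sub_self]
  rw [hspan, Ideal.mem_span_singleton'] at hz
  obtain ⟨y, rfl⟩ := hz
  obtain ⟨y', hy'⟩ := exists_mul_pow_eq_mul_pow hnormal y (p ^ n)
  rw [hy', hpow, mul_zero]

end CyclicKernel

theorem mapDomainRingHom_surjective {F M N : Type*} [Semiring F] [Monoid M] [Monoid N] {φ : M →* N}
    (hφ : Function.Surjective φ) : Function.Surjective (mapDomainRingHom F φ) := by
  intro z
  obtain ⟨w, hw⟩ := Finsupp.mapDomain_surjective hφ z.coeff
  exact ⟨ofCoeff w, coeff_injective (by simpa using hw)⟩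

theorem jacobson_bot_eq_ker_mapDomainRingHom {F G Q : Type*} [Field F] [Group G] [Group Q]
    [Finite Q] [NeZero (Nat.card Q : F)] {p n : ℕ} [Fact p.Prime] [CharP F p]
    {φ : G →* Q} (hφ : Function.Surjective φ) {g : G} (hker : φ.ker = Subgroup.zpowers g)
    (hg : g ^ p ^ n = 1) :
    Ideal.jacobson (⊥ : Ideal F[G]) = RingHom.ker (mapDomainRingHom F φ) := by
  refine le_antisymm (fun z hz => ?_) (le_jacobson_bot_of_forall_isNilpotent fun z hz =>
    ⟨p ^ n, pow_eq_zero_of_mem_ker_mapDomainRingHom hker hg hz⟩)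
  have : RingHomSurjective (mapDomainRingHom F φ) := ⟨mapDomainRingHom_surjective hφ⟩
  rw [Ideal.jacobson_bot] at hz
  simpa [IsSemisimpleRing.jacobson_eq_bot] using Ring.le_comap_jacobson (mapDomainRingHom F φ) hz

theorem mem_center_iff_forall_commute_of {F M : Type*} [CommSemiring F] [Monoid M] {z : F[M]} :
    z ∈ Subalgebra.center F F[M] ↔ ∀ g, Commute z (of F M g) := by
  refine ⟨fun hz g => ((Subalgebra.mem_center_iff.1 hz) _).symm, fun hz => ?_⟩
  rw [Subalgebra.mem_center_iff]
  intro w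
  change Commute w z
  induction w using MonoidAlgebra.induction_on with
  | of g => exact (hz g).symm
  | add x y hx hy => exact hx.add_left hy
  | smul a x hx => exact hx.smul_left a

section Center

variable {F G : Type*} [CommRing F] [Group G]

theorem mul_of_eq_self_of_mem_zpowers {g x : G} {w : F[G]} (hw : w * of F G g = w)
    (hx : x ∈ Subgroup.zpowers g) : w * of F G x = w := by
  obtain ⟨m, rfl⟩ := hx
  have hsemi : SemiconjBy w ((of F G).toHomUnits g : F[G]) ((1 : F[G]ˣ) : F[G]) := by
    simpa [SemiconjBy] using hw
  simpa [SemiconjBy, ← map_zpow] using hsemi.units_zpow_right m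

theorem commute_of_of_commute_of_mul_of_sub_one {g h : G} {z : F[G]}
    (hcoset : ∀ x : G, ∃ y, Commute y h ∧ y⁻¹ * x ∈ Subgroup.zpowers g)
    (hzg : Commute z (of F G g - 1)) (hzhg : Commute z (of F G h * (of F G g - 1))) :
    Commute z (of F G h) := by
  set w := z * of F G h - of F G h * z with hw
  have hwg : w * of F G g = w := by
    rw [← sub_eq_zero]
    calc w * of F G g - w
        = z * (of F G h * (of F G g - 1)) - of F G h * (z * (of F G g - 1)) := by
          rw [hw]; noncomm_ring
      _ = 0 := by rw [hzhg.eq, hzg.eq, mul_assoc, sub_self]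
  suffices w = 0 from sub_eq_zero.1 this
  ext x
  obtain ⟨y, hyh, hyx⟩ := hcoset x
  have hyh' : y * h⁻¹ = h⁻¹ * y := hyh.inv_right
  calc w.coeff x = (w * of F G (y⁻¹ * x)).coeff x := by
        rw [mul_of_eq_self_of_mem_zpowers hwg hyx]
    _ = w.coeff y := by simp
    _ = 0 := by simp [hw, hyh']

theorem mem_center_iff_forall_coeff_eq {z : F[G]} :
    z ∈ Subalgebra.center F F[G] ↔ ∀ g h, IsConj g h → z.coeff g = z.coeff h := by
  rw [mem_center_iff_forall_commute_of]
  constructor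
  · intro hz g h hgh
    obtain ⟨c, rfl⟩ := isConj_iff.1 hgh
    have := congrArg (fun w => w.coeff (c * g)) (hz c).eq
    simpa using this.symm
  · intro hz c
    ext x
    have hconj : IsConj (x * c⁻¹) (c⁻¹ * x) := isConj_iff.2 ⟨c⁻¹, by group⟩
    simpa using hz _ _ hconj

end Center

theorem finrank_center (F G : Type*) [CommRing F] [Nontrivial F] [Group G] [Finite G] :
    Module.finrank F (Subalgebra.center F F[G]) = Nat.card (ConjClasses G) := by
  let extend : (ConjClasses G → F) →ₗ[F] F[G] :=
    (coeffLinearEquiv F).symm.toLinearMap ∘ₗ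
      (Finsupp.linearEquivFunOnFinite F F G).symm.toLinearMap ∘ₗ
      LinearMap.funLeft F F ConjClasses.mk
  have hcoeff (f : ConjClasses G → F) (g : G) : (extend f).coeff g = f (ConjClasses.mk g) := rfl
  have hinj : Function.Injective extend := by
    intro f f' hff'
    funext c
    obtain ⟨g, rfl⟩ := ConjClasses.exists_rep c
    rw [← hcoeff f, hff', hcoeff]
  have hrange : LinearMap.range extend = (Subalgebra.center F F[G]).toSubmodule := by
    ext z
    rw [Subalgebra.mem_toSubmodule, mem_center_iff_forall_coeff_eq]
    constructor
    · rintro ⟨f, rfl⟩ g h hgh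
      rw [hcoeff, hcoeff, ConjClasses.mk_eq_mk_iff_isConj.2 hgh]
    · intro hz
      exact ⟨Quotient.lift z.coeff hz, by ext g; exact hcoeff _ g⟩
  have := Fintype.ofFinite (ConjClasses G)
  calc Module.finrank F (Subalgebra.center F F[G])
      = Module.finrank F (LinearMap.range extend) := by rw [hrange]; rfl
    _ = Nat.card (ConjClasses G) := by
      rw [LinearMap.finrank_range_of_inj hinj, Module.finrank_fintype_fun_eq_card,
        Nat.card_eq_fintype_card]

theorem natCard_conjClasses_prod (G H : Type*) [Group G] [Group H] [Finite G] [Finite H] :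
    Nat.card (ConjClasses (G × H)) = Nat.card (ConjClasses G) * Nat.card (ConjClasses H) := by
  have hG : (Nat.card G : ℚ) ≠ 0 := by exact_mod_cast Nat.card_pos.ne'
  have hH : (Nat.card H : ℚ) ≠ 0 := by exact_mod_cast Nat.card_pos.ne'
  have hprob := commProb_prod G H
  rw [commProb_def', commProb_def', commProb_def', Nat.card_prod, Nat.cast_mul] at hprob
  field_simp at hprob
  exact_mod_cast hprob

theorem coeff_mapDomain_eq_sum {F M N ι : Type*} [Semiring F] [Fintype ι] {f : M → N} {y : N}
    {e : ι → M} (he : Function.Injective e) (hfiber : ∀ x, f x = y ↔ x ∈ Set.range e) (z : F[M]) :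
    (mapDomain f z).coeff y = ∑ i, z.coeff (e i) := by
  classical
  induction z using MonoidAlgebra.induction_linear with
  | zero => simp
  | add z w hz hw =>
    rw [mapDomain_add, coeff_add, Finsupp.add_apply, hz, hw, ← Finset.sum_add_distrib]
    rfl
  | single x a =>
    rw [mapDomain_single]
    by_cases hx : f x = y
    · obtain ⟨i, rfl⟩ := (hfiber x).1 hx
      simp [Finsupp.single_apply, hx, he.eq_iff]
    · have hne (i : ι) : x ≠ e i := fun h => hx ((hfiber x).2 ⟨i, h.symm⟩)
      simp [hx, hne]

section Dihedral

open DihedralGroup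

theorem isConj_sr_sr_of_odd {n : ℕ} (hn : Odd n) (i j : ZMod n) : IsConj (sr i) (sr j) := by
  obtain ⟨m, rfl⟩ := hn
  have hm : (2 * m + 1 : ZMod (2 * m + 1)) = 0 := by
    exact_mod_cast ZMod.natCast_self (2 * m + 1)
  refine isConj_iff.2 ⟨r (m * (j - i)), ?_⟩
  simp only [r_mul_sr, inv_r, sr_mul_r, sr.injEq]
  linear_combination (i - j) * hm

/-- The homomorphism from the dihedral group to `±1` whose kernel is the group of rotations. -/
def dihedralSign (n : ℕ) : DihedralGroup n →* ℤˣ where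
  toFun
    | r _ => 1
    | sr _ => -1
  map_one' := rfl
  map_mul' := by rintro (i | i) (j | j) <;> rfl

/-- The quotient map of `A × D₂ₙ` by the group of rotations of the dihedral factor. -/
def modRotations (A : Type*) [Group A] (n : ℕ) : A × DihedralGroup n →* A × ℤˣ :=
  (MonoidHom.id A).prodMap (dihedralSign n)

section ModRotations

variable {A : Type*} [Group A] {n : ℕ}

@[simp]
theorem modRotations_r (c : A) (i : ZMod n) : modRotations A n (c, r i) = (c, 1) := rfl

@[simp]
theorem modRotations_sr (c : A) (i : ZMod n) : modRotations A n (c, sr i) = (c, -1) := rfl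

theorem modRotations_surjective : Function.Surjective (modRotations A n) := by
  rintro ⟨c, ε⟩
  obtain rfl | rfl := Int.units_eq_one_or ε
  · exact ⟨(c, r 0), rfl⟩
  · exact ⟨(c, sr 0), rfl⟩

theorem ker_modRotations : (modRotations A n).ker = Subgroup.zpowers (1, r 1) := by
  ext ⟨c, i | i⟩
  · obtain ⟨m, rfl⟩ := ZMod.intCast_surjective i
    suffices c = 1 ↔ ∃ l : ℤ, 1 = c ∧ (l : ZMod n) = m by
      simpa [MonoidHom.mem_ker, Subgroup.mem_zpowers_iff]
    exact ⟨fun hc => ⟨m, hc.symm, rfl⟩, fun ⟨_, hc, _⟩ => hc.symm⟩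
  · simp [MonoidHom.mem_ker, Subgroup.mem_zpowers_iff]

theorem mem_ker_mapDomainRingHom_modRotations {F : Type*} [CommRing F] [NeZero n]
    {z : F[A × DihedralGroup n]} :
    z ∈ RingHom.ker (mapDomainRingHom F (modRotations A n)) ↔
      ∀ c, ∑ i, z.coeff (c, r i) = 0 ∧ ∑ i, z.coeff (c, sr i) = 0 := by
  have hr (c : A) : (mapDomain (modRotations A n) z).coeff (c, 1) = ∑ i, z.coeff (c, r i) := by
    refine coeff_mapDomain_eq_sum (fun i j hij => by simpa using hij) ?_ z
    rintro ⟨d, i | i⟩ <;> simp [eq_comm]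
  have hsr (c : A) : (mapDomain (modRotations A n) z).coeff (c, -1) = ∑ i, z.coeff (c, sr i) := by
    refine coeff_mapDomain_eq_sum (fun i j hij => by simpa using hij) ?_ z
    rintro ⟨d, i | i⟩ <;> simp [eq_comm]
  change mapDomain (modRotations A n) z = 0 ↔ _
  simp only [← hr, ← hsr]
  refine ⟨fun hz c => by simp [hz], fun hz => ?_⟩
  ext ⟨c, ε⟩
  obtain rfl | rfl := Int.units_eq_one_or ε
  exacts [(hz c).1, (hz c).2]

end ModRotations

variable {F A : Type*} [CommGroup A] {n : ℕ}

theorem centralizer_span_of_rotation_sub_one [CommRing F] :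
    Set.centralizer (Ideal.span {of F (A × DihedralGroup n) (1, r 1) - 1} : Set _) =
      (Subalgebra.center F F[A × DihedralGroup n] : Set F[A × DihedralGroup n]) := by
  refine Set.Subset.antisymm (fun z hz => ?_) (Set.center_subset_centralizer _)
  rw [SetLike.mem_coe, mem_center_iff_forall_commute_of]
  have hspan (y : F[A × DihedralGroup n]) :
      Commute z (y * (of F (A × DihedralGroup n) (1, r 1) - 1)) :=
    (hz _ (Ideal.mul_mem_left _ y (Ideal.mem_span_singleton_self _))).symm
  have hrot : Commute z (of F _ (1, r 1) - 1) := by simpa using hspan 1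
  have hsr : Commute z (of F _ (1, sr 0)) := by
    refine commute_of_of_commute_of_mul_of_sub_one ?_ hrot (hspan _)
    rw [← ker_modRotations]
    rintro ⟨c, i | i⟩
    · exact ⟨(c, 1), by simp [Prod.commute_iff], by simp [MonoidHom.mem_ker]⟩
    · exact ⟨(c, sr 0), by simp [Prod.commute_iff], by simp [MonoidHom.mem_ker]⟩
  have hr (i : ZMod n) : Commute z (of F _ (1, r i)) := by
    obtain ⟨m, rfl⟩ := ZMod.intCast_surjective i
    have hone : Commute z ((of F (A × DihedralGroup n)).toHomUnits (1, r 1) : F[_]) := by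
      simpa using hrot.add_right (.one_right z)
    simpa [← map_zpow] using hone.units_zpow_right m
  have hA (c : A) : Commute z (of F (A × DihedralGroup n) (c, 1)) :=
    (of_commute (fun x => Prod.ext (mul_comm _ _) (by simp)) z).symm
  rintro ⟨c, i | i⟩
  · simpa using (hA c).mul_right (hr i)
  · simpa using ((hA c).mul_right hsr).mul_right (hr i)

/-- The linear map summing the coefficients of an element of `F[A × D₂ₙ]` over the rotations lying
above each element of `A`; it cuts out the Jacobson radical in the center of the group algebra. -/
def rotationSum (F A : Type*) [CommRing F] (n : ℕ) [NeZero n] :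
    F[A × DihedralGroup n] →ₗ[F] (A → F) where
  toFun z c := ∑ i, z.coeff (c, r i)
  map_add' z w := by
    ext c
    simp [Finset.sum_add_distrib]
  map_smul' a z := by
    ext c
    simp [Finset.mul_sum]

theorem mem_ker_iff_rotationSum_eq_zero [CommRing F] [NeZero n] (hn : Odd n) (hF : (n : F) = 0)
    {z : F[A × DihedralGroup n]} (hz : z ∈ Subalgebra.center F F[A × DihedralGroup n]) :
    z ∈ RingHom.ker (mapDomainRingHom F (modRotations A n)) ↔ rotationSum F A n z = 0 := by
  have hsr (c : A) : ∑ i, z.coeff (c, sr i) = 0 := by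
    have hconst (i : ZMod n) : z.coeff (c, sr i) = z.coeff (c, sr 0) := by
      refine mem_center_iff_forall_coeff_eq.1 hz _ _ ?_
      obtain ⟨x, hx⟩ := isConj_iff.1 (isConj_sr_sr_of_odd hn i 0)
      exact isConj_iff.2 ⟨(1, x), Prod.ext (by simp) hx⟩
    simp [hconst, hF]
  rw [mem_ker_mapDomainRingHom_modRotations]
  simp [hsr, funext_iff, rotationSum]

theorem range_rotationSum_comp_subtype_center [CommRing F] [NeZero n] [Finite A] :
    LinearMap.range (rotationSum F A n ∘ₗ
      (Subalgebra.center F F[A × DihedralGroup n]).toSubmodule.subtype) = ⊤ := by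
  classical
  have := Fintype.ofFinite A
  have hcenter (c : A) (a : F) :
      single (c, 1) a ∈ Subalgebra.center F F[A × DihedralGroup n] :=
    Subalgebra.mem_center_iff.2 fun w =>
      (single_commute (fun x => Prod.ext (mul_comm _ _) (by simp)) (Commute.all a) w).symm
  refine LinearMap.range_eq_top.2 fun f => ?_
  refine ⟨⟨∑ c, single (c, 1) (f c), sum_mem fun c _ => hcenter c (f c)⟩, ?_⟩
  ext c
  simp [rotationSum, coeff_sum, Finsupp.single_apply, ite_and, DihedralGroup.one_def, -r_zero]

theorem natCard_conjClasses_prod_dihedralGroup [Finite A] (hn : Odd n) :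
    Nat.card (ConjClasses (A × DihedralGroup n)) = Nat.card A * ((n + 3) / 2) := by
  have : NeZero n := ⟨hn.pos.ne'⟩
  rw [natCard_conjClasses_prod, card_conjClasses_odd hn,
    ← Nat.card_eq_of_bijective _ (ConjClasses.mk_bijective (α := A))]

theorem finrank_ker_inf_center [Field F] [Finite A] (hn : Odd n) (hF : (n : F) = 0) :
    Module.finrank F
      ↥((RingHom.ker (mapDomainRingHom F (modRotations A n))).restrictScalars F ⊓
        (Subalgebra.center F F[A × DihedralGroup n]).toSubmodule) = Nat.card A * ((n + 1) / 2) := by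
  have : NeZero n := ⟨hn.pos.ne'⟩
  have := Fintype.ofFinite A
  set C := (Subalgebra.center F F[A × DihedralGroup n]).toSubmodule with hC
  have hker : (RingHom.ker (mapDomainRingHom F (modRotations A n))).restrictScalars F ⊓ C =
      (LinearMap.ker (rotationSum F A n ∘ₗ C.subtype)).map C.subtype := by
    rw [LinearMap.ker_comp, Submodule.map_comap_subtype, inf_comm]
    ext z
    exact and_congr_right fun hz => mem_ker_iff_rotationSum_eq_zero hn hF hz
  have hrank := (rotationSum F A n ∘ₗ C.subtype).finrank_range_add_finrank_ker
  rw [range_rotationSum_comp_subtype_center, finrank_top, Module.finrank_fintype_fun_eq_card,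
    ← Nat.card_eq_fintype_card, hC, Subalgebra.finrank_toSubmodule, finrank_center,
    natCard_conjClasses_prod_dihedralGroup hn, show (n + 3) / 2 = (n + 1) / 2 + 1 by omega,
    mul_add_one, add_comm] at hrank
  rw [hker, Submodule.finrank_map_subtype_eq]
  exact Nat.add_right_cancel hrank

theorem natCard_ker_inter_centralizer [Field F] [Finite A] (hn : Odd n) (hF : (n : F) = 0) :
    Nat.card ((RingHom.ker (mapDomainRingHom F (modRotations A n)) : Set F[A × DihedralGroup n]) ∩
      Set.centralizer (RingHom.ker (mapDomainRingHom F (modRotations A n)) : Set _) : Set _) =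
      Nat.card F ^ (Nat.card A * ((n + 1) / 2)) := by
  have : NeZero n := ⟨hn.pos.ne'⟩
  rw [ker_mapDomainRingHom_eq_span ker_modRotations, centralizer_span_of_rotation_sub_one,
    ← ker_mapDomainRingHom_eq_span ker_modRotations, ← finrank_ker_inf_center hn hF]
  exact Module.natCard_eq_pow_finrank (K := F) (V := ↥(
    (RingHom.ker (mapDomainRingHom F (modRotations A n))).restrictScalars F ⊓
      (Subalgebra.center F F[A × DihedralGroup n]).toSubmodule))

theorem stmt_13_general [Field F] [Finite A] {p k : ℕ} [Fact p.Prime] [CharP F p] (hp : Odd p)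
    (hA : ¬ p ∣ Nat.card A) (hF : Nat.card F = p ^ k) :
    Nonempty
      (Subgroup.center (oneAddUnits (Ideal.jacobson (⊥ : Ideal F[A × DihedralGroup p]))) ≃*
        (Fin (Nat.card A * ((p + 1) / 2) * k) → Multiplicative (ZMod p))) := by
  have hprime : p.Prime := Fact.out
  have : NeZero (Nat.card (A × ℤˣ) : F) := by
    refine ⟨fun h => ?_⟩
    rw [CharP.cast_eq_zero_iff F p, Nat.card_prod, hprime.dvd_mul] at h
    obtain hdvd | hdvd := h
    · exact hA hdvd
    · rw [Nat.card_eq_fintype_card, Fintype.card_units_int] at hdvd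
      have hp_two : p = 2 := (Nat.prime_dvd_prime_iff_eq hprime Nat.prime_two).1 hdvd
      exact absurd hp (by simp [hp_two])
  have hpow : ((1, r 1) : A × DihedralGroup p) ^ p ^ 1 = 1 := by simp
  have := charP_monoidAlgebra F (A × DihedralGroup p) p
  rw [jacobson_bot_eq_ker_mapDomainRingHom modRotations_surjective ker_modRotations hpow]
  refine nonempty_center_oneAddUnits_mulEquiv (fun z hz => ?_) ?_
  · simpa using pow_eq_zero_of_mem_ker_mapDomainRingHom ker_modRotations hpow hz
  · rw [natCard_ker_inter_centralizer hp (CharP.cast_eq_zero F p), hF, ← pow_mul, mul_comm k]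

end Dihedral

/-- For `F` a finite field with `5^k` elements and `G = C₃ × D₁₀`, the center of the group
`V = 1 + J(FG)` is elementary abelian of order `5^(9k)`, i.e. `Z(V) ≅ C₅^(9k)`. -/
theorem stmt_13 (F : Type) [Field F] [Fintype F] (k : ℕ) (hk : 0 < k)
    (hchar : CharP F 5) (hcard : Fintype.card F = 5 ^ k) :
    let G := Multiplicative (ZMod 3) × DihedralGroup 5
    ∃ H : Subgroup (MonoidAlgebra F G)ˣ,
      (∀ u : (MonoidAlgebra F G)ˣ,
        u ∈ H ↔ (u : MonoidAlgebra F G) - 1 ∈ Ideal.jacobson (⊥ : Ideal (MonoidAlgebra F G))) ∧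
      Nonempty (Subgroup.center H ≃* (Fin (9 * k) → Multiplicative (ZMod 5))) := by
  have : Fact (Nat.Prime 5) := ⟨by norm_num⟩
  have hcenter := stmt_13_general (A := Multiplicative (ZMod 3)) (p := 5) (by decide) (by simp)
    (Nat.card_eq_fintype_card.trans hcard)
  rw [Nat.card_congr Multiplicative.toAdd, Nat.card_zmod] at hcenter
  exact ⟨oneAddUnits (Ideal.jacobson ⊥), fun _ => mem_oneAddUnits, hcenter⟩
end

section
/- Let F be a finite field with 5^k elements and G = C_3 × D_10. Then V = 1 + J(FG) is isomorphic to an iterated semidirect product (C_5^{15k} ⋊ C_5^{6k}) ⋊ C_5^{3k}. -/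
/-!
Let `A` be a finite abelian group of order prime to five and `R = F[A]`, which is semisimple by
Maschke's theorem, so that `F[A × D₁₀] = R[D₁₀]`. Sending a rotation of order five to
`exp [[0, t], [t, 0]]` and a reflection to `diag(1, -1)` identifies `R[D₁₀]` with the ring of
`2 × 2` matrices over `R[t] / (t⁵)` that are even in `t` on the diagonal and odd off it. Reduction
modulo `t` maps this ring onto the semisimple ring `R × R` with nilpotent kernel; hence `1 + J` is
the group of matrices congruent to `1` modulo `t`.

Two split surjections decompose this group. The `t`-coefficient of the lower left entry is a
homomorphism onto `R`. On its kernel, the `t²`-coefficient of the trace and the `t`-coefficient of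
the upper right entry form a homomorphism onto `R²`, split by `exp (x t²) [[1, y t], [0, 1]]`.
What remains is abelian and isomorphic to `R⁵`.
-/

theorem exists_mulEquiv_ker_semidirectProduct {E Q : Type*} [Group E] [Group Q]
    (f : E →* Q) (g : Q →* E)
    (hfg : Function.RightInverse g f) :
    ∃ φ : Q →* MulAut f.ker, Nonempty (E ≃* f.ker ⋊[φ] Q) := by
  let extension : GroupExtension f.ker E Q :=
    { inl := f.ker.subtype
      rightHom := f
      inl_injective := f.ker.subtype_injective
      range_inl_eq_ker_rightHom := f.ker.range_subtype
      rightHom_surjective := hfg.surjective }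
  let splitting : extension.Splitting := { toMonoidHom := g, rightInverse_rightHom := hfg }
  exact ⟨splitting.conjAct, ⟨splitting.semidirectProductMulEquiv.symm⟩⟩

theorem nonempty_multiplicative_mulEquiv_pi_zmod {p : ℕ} [Fact p.Prime] (M : Type*)
    [AddCommGroup M] [Module (ZMod p) M] {m : ℕ} (hM : Nat.card M = p ^ m) :
    Nonempty (Multiplicative M ≃* (Fin m → Multiplicative (ZMod p))) := by
  have hp : p.Prime := Fact.out
  have : Finite M := Nat.finite_of_card_ne_zero (hM ▸ pow_ne_zero m hp.ne_zero)
  have hfinrank : Module.finrank (ZMod p) M = m := by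
    rw [Module.natCard_eq_pow_finrank (K := ZMod p), Nat.card_zmod] at hM
    exact Nat.pow_right_injective hp.two_le hM
  exact ⟨(Module.finBasisOfFinrankEq (ZMod p) M hfinrank).equivFun.toAddEquiv.toMultiplicative.trans
    (MulEquiv.piMultiplicative _)⟩

theorem natCard_monoidAlgebra (R G : Type*) [Semiring R] [Finite G] :
    Nat.card (MonoidAlgebra R G) = Nat.card R ^ Nat.card G := by
  rw [Nat.card_congr (MonoidAlgebra.coeffEquiv.trans Finsupp.equivFunOnFinite), Nat.card_fun]

section OneAddJacobson

variable {S T : Type*} [Ring S] [Ring T]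

theorem jacobson_bot_eq_ker_of_isNilpotent (f : S →+* T) (hf : Function.Surjective f)
    (hnil : ∀ x ∈ RingHom.ker f, IsNilpotent x) (hT : Ideal.jacobson (⊥ : Ideal T) = ⊥) :
    Ideal.jacobson (⊥ : Ideal S) = RingHom.ker f := by
  apply le_antisymm
  · calc Ideal.jacobson ⊥ ≤ Ideal.jacobson (Ideal.comap f ⊥) := Ideal.jacobson_mono bot_le
      _ = RingHom.ker f := by rw [← Ideal.comap_jacobson_of_surjective hf, hT, RingHom.ker]
  · intro x hx
    refine Ideal.mem_jacobson_iff.2 fun y ↦ ?_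
    obtain ⟨u, hu⟩ := (hnil _ (Ideal.mul_mem_left _ y hx)).isUnit_one_add
    refine ⟨↑u⁻¹, Ideal.mem_bot.2 (sub_eq_zero.2 ?_)⟩
    calc ↑u⁻¹ * y * x + ↑u⁻¹ = ↑u⁻¹ * (1 + y * x) := by noncomm_ring
      _ = 1 := by rw [← hu, Units.inv_mul]

/-- The normal subgroup `1 + J(S)` of the unit group of a ring `S`, encoded as the kernel of
reduction modulo the Jacobson radical. -/
def oneAddJacobson (S : Type*) [Ring S] : Subgroup Sˣ :=
  (Units.map (Ideal.Quotient.mk (Ring.jacobson S)).toMonoidHom).ker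

theorem mem_oneAddJacobson {u : Sˣ} :
    u ∈ oneAddJacobson S ↔ (u : S) - 1 ∈ Ideal.jacobson (⊥ : Ideal S) := by
  rw [Ideal.jacobson_bot, ← Ideal.Quotient.eq, oneAddJacobson, MonoidHom.mem_ker, Units.ext_iff]
  rfl

theorem oneAddJacobson_eq_ker (f : S →+* T) (hf : Ideal.jacobson (⊥ : Ideal S) = RingHom.ker f) :
    oneAddJacobson S = (Units.map f.toMonoidHom).ker := by
  ext u
  rw [mem_oneAddJacobson, hf, RingHom.mem_ker, map_sub, map_one, sub_eq_zero, MonoidHom.mem_ker,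
    Units.ext_iff]
  rfl

theorem ringEquiv_mem_jacobson_bot (e : S ≃+* T) {x : S} :
    e x ∈ Ideal.jacobson (⊥ : Ideal T) ↔ x ∈ Ideal.jacobson (⊥ : Ideal S) := by
  have hcomap := Ideal.comap_jacobson_of_surjective (f := (e : S →+* T)) e.surjective (K := ⊥)
  rw [← RingHom.ker, RingHom.ker_coe_equiv] at hcomap
  rw [← hcomap]
  rfl

theorem map_oneAddJacobson (e : S ≃+* T) :
    (oneAddJacobson S).map (Units.mapEquiv e.toMulEquiv).toMonoidHom = oneAddJacobson T := by
  ext u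
  rw [Subgroup.mem_map_equiv, mem_oneAddJacobson, mem_oneAddJacobson,
    ← ringEquiv_mem_jacobson_bot e]
  simp

/-- The isomorphism `1 + J(S) ≃* 1 + J(T)` induced by a ring isomorphism `S ≃+* T`. -/
def oneAddJacobsonCongr (e : S ≃+* T) : oneAddJacobson S ≃* oneAddJacobson T :=
  ((Units.mapEquiv e.toMulEquiv).subgroupMap _).trans
    (MulEquiv.subgroupCongr (map_oneAddJacobson e))

end OneAddJacobson

theorem five_eq_zero (R : Type*) [CommRing R] [Algebra (ZMod 5) R] : (5 : R) = 0 := by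
  have h := congrArg (algebraMap (ZMod 5) R) (by decide : (5 : ZMod 5) = 0)
  rwa [map_ofNat, map_zero] at h

theorem three_mul_add_sq {R : Type*} [CommRing R] [Algebra (ZMod 5) R] (x y : R) :
    3 * (x + y) ^ 2 = 3 * x ^ 2 + 3 * y ^ 2 + x * y := by
  linear_combination x * y * five_eq_zero R

/-- Checkerboard matrices over `R`: the ring of matrices `[[a, b], [c, d]]` over `R[t] / (t ^ 5)`
whose diagonal entries are even and whose off-diagonal entries are odd in `t`. The fields are the
coefficients in `a = a0 + a1 t² + a2 t⁴`, `b = b0 t + b1 t³`, `c = c0 t + c1 t³` and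
`d = d0 + d1 t² + d2 t⁴`. -/
@[ext]
structure CheckerboardMatrix (R : Type*) where
  a0 : R
  a1 : R
  a2 : R
  b0 : R
  b1 : R
  c0 : R
  c1 : R
  d0 : R
  d1 : R
  d2 : R

namespace CheckerboardMatrix

variable {R : Type*} [CommRing R]

@[simps]
instance : Zero (CheckerboardMatrix R) := ⟨⟨0, 0, 0, 0, 0, 0, 0, 0, 0, 0⟩⟩

@[simps]
instance : One (CheckerboardMatrix R) := ⟨⟨1, 0, 0, 0, 0, 0, 0, 1, 0, 0⟩⟩

@[simps]
instance : Add (CheckerboardMatrix R) where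
  add x y :=
    { a0 := x.a0 + y.a0
      a1 := x.a1 + y.a1
      a2 := x.a2 + y.a2
      b0 := x.b0 + y.b0
      b1 := x.b1 + y.b1
      c0 := x.c0 + y.c0
      c1 := x.c1 + y.c1
      d0 := x.d0 + y.d0
      d1 := x.d1 + y.d1
      d2 := x.d2 + y.d2 }

@[simps]
instance : Neg (CheckerboardMatrix R) where
  neg x := ⟨-x.a0, -x.a1, -x.a2, -x.b0, -x.b1, -x.c0, -x.c1, -x.d0, -x.d1, -x.d2⟩

@[simps]
instance : SMul R (CheckerboardMatrix R) where
  smul r x := ⟨r * x.a0, r * x.a1, r * x.a2, r * x.b0, r * x.b1, r * x.c0, r * x.c1,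
    r * x.d0, r * x.d1, r * x.d2⟩

@[simps]
instance : Mul (CheckerboardMatrix R) where
  mul x y :=
    { a0 := x.a0 * y.a0
      a1 := x.a0 * y.a1 + x.a1 * y.a0 + x.b0 * y.c0
      a2 := x.a0 * y.a2 + x.a1 * y.a1 + x.a2 * y.a0 + x.b0 * y.c1 + x.b1 * y.c0
      b0 := x.a0 * y.b0 + x.b0 * y.d0
      b1 := x.a0 * y.b1 + x.a1 * y.b0 + x.b0 * y.d1 + x.b1 * y.d0
      c0 := x.c0 * y.a0 + x.d0 * y.c0
      c1 := x.c0 * y.a1 + x.c1 * y.a0 + x.d0 * y.c1 + x.d1 * y.c0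
      d0 := x.d0 * y.d0
      d1 := x.c0 * y.b0 + x.d0 * y.d1 + x.d1 * y.d0
      d2 := x.c0 * y.b1 + x.c1 * y.b0 + x.d0 * y.d2 + x.d1 * y.d1 + x.d2 * y.d0 }

instance : Ring (CheckerboardMatrix R) where
  add_assoc x y z := by ext <;> simp [add_assoc]
  zero_add x := by ext <;> simp
  add_zero x := by ext <;> simp
  add_comm x y := by ext <;> simp [add_comm]
  neg_add_cancel x := by ext <;> simp
  left_distrib x y z := by ext <;> simp <;> ring
  right_distrib x y z := by ext <;> simp <;> ring
  zero_mul x := by ext <;> simp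
  mul_zero x := by ext <;> simp
  mul_assoc x y z := by ext <;> simp <;> ring
  one_mul x := by ext <;> simp
  mul_one x := by ext <;> simp
  nsmul := nsmulRec
  zsmul := zsmulRec

instance : Algebra R (CheckerboardMatrix R) where
  algebraMap :=
    { toFun r := ⟨r, 0, 0, 0, 0, 0, 0, r, 0, 0⟩
      map_one' := rfl
      map_zero' := rfl
      map_mul' x y := by ext <;> simp
      map_add' x y := by ext <;> simp }
  commutes' r x := by ext <;> simp [mul_comm]
  smul_def' r x := by ext <;> simp

/-- The coordinates of a checkerboard matrix, in the order in which the structure lists them. -/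
def coordinates (R : Type*) [CommRing R] : CheckerboardMatrix R ≃ₗ[R] (Fin 10 → R) where
  toFun x := ![x.a0, x.a1, x.a2, x.b0, x.b1, x.c0, x.c1, x.d0, x.d1, x.d2]
  invFun v := ⟨v 0, v 1, v 2, v 3, v 4, v 5, v 6, v 7, v 8, v 9⟩
  map_add' x y := by simp
  map_smul' r x := by simp
  left_inv x := rfl
  right_inv v := by ext i; fin_cases i <;> rfl

/-- Reduction modulo `t`, which leaves only the constant terms of the diagonal entries. -/
def modT (R : Type*) [CommRing R] : CheckerboardMatrix R →+* R × R where
  toFun x := (x.a0, x.d0)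
  map_one' := rfl
  map_zero' := rfl
  map_mul' _ _ := rfl
  map_add' _ _ := rfl

theorem modT_surjective : Function.Surjective (modT R) :=
  fun ⟨a, d⟩ ↦ ⟨⟨a, 0, 0, 0, 0, 0, 0, d, 0, 0⟩, rfl⟩

theorem pow_five_eq_zero_of_mem_ker_modT {x : CheckerboardMatrix R}
    (hx : x ∈ RingHom.ker (modT R)) : x ^ 5 = 0 := by
  obtain ⟨ha, hd⟩ : x.a0 = 0 ∧ x.d0 = 0 := Prod.ext_iff.1 hx
  ext <;> simp [pow_succ, ha, hd]

/-- The matrix unit `[[1, 0], [0, 0]]`. -/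
def upperIdempotent (R : Type*) [CommRing R] : CheckerboardMatrix R :=
  ⟨1, 0, 0, 0, 0, 0, 0, 0, 0, 0⟩

/-- The matrix `[[0, t], [t, 0]]`. -/
def oddSwap (R : Type*) [CommRing R] : CheckerboardMatrix R :=
  ⟨0, 0, 0, 1, 0, 1, 0, 0, 0, 0⟩

theorem oddSwap_eq_sub_pow_three :
    oddSwap R = (oddSwap R + oddSwap R ^ 3) - (oddSwap R + oddSwap R ^ 3) ^ 3 := by
  ext <;> simp [oddSwap, pow_succ, sub_eq_add_neg]

theorem eq_upperIdempotent_mul_sum_add (w : CheckerboardMatrix R) :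
    w = upperIdempotent R * ∑ i, ![w.a0, w.b0, w.a1, w.b1, w.a2] i • oddSwap R ^ (i : ℕ)
      + (1 - upperIdempotent R)
          * ∑ i, ![w.d0, w.c0, w.d1, w.c1, w.d2] i • oddSwap R ^ (i : ℕ) := by
  ext <;> simp [Fin.sum_univ_five, upperIdempotent, oddSwap, pow_succ, sub_eq_add_neg]

theorem subalgebra_eq_top_of_mem {S : Subalgebra R (CheckerboardMatrix R)}
    (hE : upperIdempotent R ∈ S) (hT : oddSwap R ∈ S) : S = ⊤ := by
  have hpoly : ∀ r : Fin 5 → R, ∑ i, r i • oddSwap R ^ (i : ℕ) ∈ S :=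
    fun r ↦ sum_mem fun i _ ↦ S.smul_mem (pow_mem hT _) _
  refine Algebra.eq_top_iff.2 fun w ↦ ?_
  rw [eq_upperIdempotent_mul_sum_add w]
  exact add_mem (mul_mem hE (hpoly _)) (mul_mem (sub_mem S.one_mem hE) (hpoly _))

section CharFive

/-- The exponential of `i [[0, t], [t, 0]]` in characteristic five, where `2⁻¹ = 3`, `6⁻¹ = 1` and
`24⁻¹ = 4`; it is the image of the rotation `r i`. -/
def rotation (i : R) : CheckerboardMatrix R :=
  ⟨1, 3 * i ^ 2, 4 * i ^ 4, i, i ^ 3, i, i ^ 3, 1, 3 * i ^ 2, 4 * i ^ 4⟩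

/-- The matrix `[[1, 0], [0, -1]]`, the image of the reflection `sr 0`. -/
def reflection (R : Type*) [CommRing R] : CheckerboardMatrix R :=
  ⟨1, 0, 0, 0, 0, 0, 0, -1, 0, 0⟩

@[simp]
theorem rotation_zero : rotation (0 : R) = 1 := by
  ext <;> simp [rotation]

theorem reflection_mul_self : reflection R * reflection R = 1 := by
  ext <;> simp [reflection]

theorem rotation_mul_reflection (i : R) :
    rotation i * reflection R = reflection R * rotation (-i) := by
  ext <;> simp [rotation, reflection] <;> ring

variable [Algebra (ZMod 5) R]

theorem rotation_add (i j : R) : rotation (i + j) = rotation i * rotation j := by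
  have four_mul_add_pow_four : 4 * (i + j) ^ 4
      = 4 * i ^ 4 + 4 * j ^ 4 + 9 * (i ^ 2 * j ^ 2) + i ^ 3 * j + i * j ^ 3 := by
    linear_combination (3 * i ^ 3 * j + 3 * i * j ^ 3 + 3 * i ^ 2 * j ^ 2) * five_eq_zero R
  ext <;> simp [rotation, three_mul_add_sq, four_mul_add_pow_four] <;> ring

/-- The representation of the dihedral group of order ten by checkerboard matrices in which
rotations exponentiate `[[0, t], [t, 0]]` and reflections negate it. -/
def dihedralRep (R : Type*) [CommRing R] [Algebra (ZMod 5) R] :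
    DihedralGroup 5 →* CheckerboardMatrix R where
  toFun
    | .r i => rotation (algebraMap (ZMod 5) R i)
    | .sr i => reflection R * rotation (algebraMap (ZMod 5) R i)
  map_one' := by
    change rotation (algebraMap (ZMod 5) R 0) = 1
    rw [map_zero, rotation_zero]
  map_mul' := by
    rintro (i | i) (j | j) <;>
      simp only [DihedralGroup.r_mul_r, DihedralGroup.r_mul_sr, DihedralGroup.sr_mul_r,
        DihedralGroup.sr_mul_sr, map_add, map_sub]
    · rw [rotation_add]
    · rw [← mul_assoc, rotation_mul_reflection, mul_assoc, ← rotation_add, neg_add_eq_sub]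
    · rw [rotation_add, mul_assoc]
    · rw [mul_assoc, ← mul_assoc (rotation _), rotation_mul_reflection, mul_assoc,
        ← rotation_add, neg_add_eq_sub, ← mul_assoc, reflection_mul_self, one_mul]

theorem upperIdempotent_eq_smul_one_add_reflection :
    upperIdempotent R = (3 : R) • (1 + reflection R) := by
  ext <;> simp [upperIdempotent, reflection]
  linear_combination -five_eq_zero R

/-- In characteristic five the hyperbolic sine `3 (exp T - exp (-T))` of `T = [[0, t], [t, 0]]` is
`T + T ^ 3`, because `T ^ 5 = 0`. -/
theorem smul_rotation_sub_rotation_neg :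
    (3 : R) • (rotation (1 : R) - rotation (-1)) = oddSwap R + oddSwap R ^ 3 := by
  ext <;> simp [rotation, oddSwap, pow_succ, sub_eq_add_neg] <;>
    linear_combination five_eq_zero R

theorem lift_dihedralRep_surjective :
    Function.Surjective (MonoidAlgebra.lift R (CheckerboardMatrix R) _ (dihedralRep R)) := by
  set S := (MonoidAlgebra.lift R (CheckerboardMatrix R) _ (dihedralRep R)).range
  have hrep (g : DihedralGroup 5) : dihedralRep R g ∈ S :=
    ⟨MonoidAlgebra.of R _ g, MonoidAlgebra.lift_of ..⟩
  have hreflection : reflection R ∈ S := by simpa [dihedralRep] using hrep (.sr 0)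
  have hrotation : rotation (1 : R) ∈ S := by simpa [dihedralRep] using hrep (.r 1)
  have hrotation_neg : rotation (-1 : R) ∈ S := by simpa [dihedralRep] using hrep (.r (-1))
  have hsinh : oddSwap R + oddSwap R ^ 3 ∈ S := by
    rw [← smul_rotation_sub_rotation_neg]
    exact S.smul_mem (sub_mem hrotation hrotation_neg) _
  refine AlgHom.range_eq_top _ |>.1 (subalgebra_eq_top_of_mem (S := S) ?_ ?_)
  · rw [upperIdempotent_eq_smul_one_add_reflection]
    exact S.smul_mem (add_mem S.one_mem hreflection) _
  · rw [oddSwap_eq_sub_pow_three]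
    exact sub_mem hsinh (pow_mem hsinh 3)

theorem lift_dihedralRep_bijective :
    Function.Bijective (MonoidAlgebra.lift R (CheckerboardMatrix R) _ (dihedralRep R)) := by
  have : Module.Finite R (CheckerboardMatrix R) := .equiv (coordinates R).symm
  have e : DihedralGroup 5 ≃ Fin 10 := Fintype.equivFinOfCardEq DihedralGroup.card
  let i := (MonoidAlgebra.coeffLinearEquiv R).trans
    ((Finsupp.linearEquivFunOnFinite R R _).trans
      ((LinearEquiv.funCongrLeft R R e.symm).trans (coordinates R).symm))
  exact OrzechProperty.bijective_of_surjective_of_injective i.toLinearMap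
    (MonoidAlgebra.lift R (CheckerboardMatrix R) _ (dihedralRep R)).toLinearMap
    i.injective lift_dihedralRep_surjective

/-- The group algebra of the dihedral group of order ten in characteristic five is the ring of
checkerboard matrices. -/
noncomputable def dihedralAlgEquiv (R : Type*) [CommRing R] [Algebra (ZMod 5) R] :
    MonoidAlgebra R (DihedralGroup 5) ≃ₐ[R] CheckerboardMatrix R :=
  .ofBijective _ lift_dihedralRep_bijective

end CharFive

section UnipotentUnits

/-- The checkerboard matrices congruent to the identity modulo `t`, as a group of units. -/
def unipotentUnits (R : Type*) [CommRing R] : Subgroup (CheckerboardMatrix R)ˣ :=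
  (Units.map (modT R).toMonoidHom).ker

theorem mem_unipotentUnits {u : (CheckerboardMatrix R)ˣ} :
    u ∈ unipotentUnits R ↔ u.val.a0 = 1 ∧ u.val.d0 = 1 := by
  rw [unipotentUnits, MonoidHom.mem_ker, Units.ext_iff]
  exact Prod.ext_iff

@[simp]
theorem a0_unipotentUnits (u : unipotentUnits R) : u.val.val.a0 = 1 := (mem_unipotentUnits.1 u.2).1

@[simp]
theorem d0_unipotentUnits (u : unipotentUnits R) : u.val.val.d0 = 1 := (mem_unipotentUnits.1 u.2).2

theorem oneAddJacobson_eq_unipotentUnits [IsSemisimpleRing R] :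
    oneAddJacobson (CheckerboardMatrix R) = unipotentUnits R := by
  have hjacobson : Ideal.jacobson (⊥ : Ideal (R × R)) = ⊥ := by
    rw [Ideal.jacobson_bot, IsSemisimpleRing.jacobson_eq_bot]
  exact oneAddJacobson_eq_ker _ (jacobson_bot_eq_ker_of_isNilpotent _ modT_surjective
    (fun x hx ↦ ⟨5, pow_five_eq_zero_of_mem_ker_modT hx⟩) hjacobson)

/-- A homomorphism from a group to checkerboard matrices congruent to the identity modulo `t` takes
values in `unipotentUnits`. -/
def toUnipotentUnits {G : Type*} [Group G] (f : G →* CheckerboardMatrix R)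
    (hf : ∀ g, (f g).a0 = 1 ∧ (f g).d0 = 1) : G →* unipotentUnits R :=
  f.toHomUnits.codRestrict _ fun g ↦ mem_unipotentUnits.2 (hf g)

/-- The coefficient of `t` in the lower left entry. -/
def lowerLeft (R : Type*) [CommRing R] : unipotentUnits R →* Multiplicative R where
  toFun u := .ofAdd u.val.val.c0
  map_one' := rfl
  map_mul' u v := by simp [← ofAdd_add]

/-- The lower unitriangular matrices `[[1, 0], [c t, 1]]`. -/
def lowerLeftSection (R : Type*) [CommRing R] : Multiplicative R →* unipotentUnits R :=
  toUnipotentUnits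
    { toFun c := ⟨1, 0, 0, 0, 0, c.toAdd, 0, 1, 0, 0⟩
      map_one' := rfl
      map_mul' x y := by ext <;> simp }
    fun _ ↦ ⟨rfl, rfl⟩

theorem lowerLeft_lowerLeftSection :
    Function.RightInverse (lowerLeftSection R) (lowerLeft R) := fun _ ↦ rfl

@[simp]
theorem c0_ker_lowerLeft (u : (lowerLeft R).ker) : u.val.val.val.c0 = 0 := u.2

/-- Half the coefficient of `t²` in the trace (`3` being the inverse of `2` in characteristic five)
together with the coefficient of `t` in the upper right entry. -/
def halfTraceUpperRight (R : Type*) [CommRing R] :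
    (lowerLeft R).ker →* Multiplicative (R × R) where
  toFun u := .ofAdd (3 * (u.val.val.val.a1 + u.val.val.val.d1), u.val.val.val.b0)
  map_one' := by simp
  map_mul' u v := by
    rw [← ofAdd_add, Prod.mk_add_mk]
    congr 2
    · simp
      ring
    · simp [add_comm]

@[simp]
theorem b0_ker_halfTraceUpperRight (u : (halfTraceUpperRight R).ker) :
    u.val.val.val.val.b0 = 0 :=
  (Prod.ext_iff.1 u.2).2

variable [Algebra (ZMod 5) R]

/-- The matrices `exp (x t²) [[1, y t], [0, 1]]`, where `exp (x t²) = 1 + x t² + 3 x² t⁴` in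
characteristic five. -/
def halfTraceUpperRightSection (R : Type*) [CommRing R] [Algebra (ZMod 5) R] :
    Multiplicative (R × R) →* (lowerLeft R).ker :=
  (toUnipotentUnits
    { toFun (p : Multiplicative (R × R)) :=
        let x := p.toAdd.1
        let y := p.toAdd.2
        ⟨1, x, 3 * x ^ 2, y, x * y, 0, 0, 1, x, 3 * x ^ 2⟩
      map_one' := by ext <;> simp
      map_mul' p q := by ext <;> simp [three_mul_add_sq] <;> ring }
    fun _ ↦ ⟨rfl, rfl⟩).codRestrict _ fun _ ↦ rfl

theorem halfTraceUpperRight_halfTraceUpperRightSection :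
    Function.RightInverse (halfTraceUpperRightSection R) (halfTraceUpperRight R) := by
  intro p
  refine congrArg Multiplicative.ofAdd (Prod.ext ?_ rfl)
  change 3 * (p.toAdd.1 + p.toAdd.1) = p.toAdd.1
  linear_combination p.toAdd.1 * five_eq_zero R

@[simp]
theorem d1_ker_halfTraceUpperRight (u : (halfTraceUpperRight R).ker) :
    u.val.val.val.val.d1 = -u.val.val.val.val.a1 := by
  have htrace : 3 * (u.val.val.val.val.a1 + u.val.val.val.val.d1) = 0 := (Prod.ext_iff.1 u.2).1
  linear_combination
    2 * htrace - (u.val.val.val.val.a1 + u.val.val.val.val.d1) * five_eq_zero R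

/-- The matrices `[[exp (x t²) + y t⁴, z t³], [w t³, exp (-x t²) + v t⁴]]`, parametrised by
`(x, y, z, w, v)`. -/
def kerHalfTraceUpperRightHom (R : Type*) [CommRing R] [Algebra (ZMod 5) R] :
    Multiplicative (Fin 5 → R) →* (halfTraceUpperRight R).ker :=
  ((toUnipotentUnits
    { toFun (p : Multiplicative (Fin 5 → R)) :=
        let x := p.toAdd
        ⟨1, x 0, 3 * x 0 ^ 2 + x 1, 0, x 2, 0, x 3, 1, -x 0, 3 * x 0 ^ 2 + x 4⟩
      map_one' := by ext <;> simp
      map_mul' p q := by ext <;> simp [three_mul_add_sq] <;> ring }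
    fun _ ↦ ⟨rfl, rfl⟩).codRestrict (lowerLeft R).ker fun _ ↦ rfl).codRestrict _
    fun p ↦ congrArg Multiplicative.ofAdd (Prod.ext (by simp [toUnipotentUnits]) rfl)

theorem kerHalfTraceUpperRightHom_bijective :
    Function.Bijective (kerHalfTraceUpperRightHom R) := by
  refine Function.bijective_iff_has_inverse.2 ⟨fun u ↦
    let x := u.val.val.val.val
    .ofAdd ![x.a1, x.a2 - 3 * x.a1 ^ 2, x.b1, x.c1, x.d2 - 3 * x.a1 ^ 2], fun p ↦ ?_, fun u ↦ ?_⟩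
  · refine Multiplicative.toAdd.injective (funext fun i ↦ ?_)
    fin_cases i <;> simp [kerHalfTraceUpperRightHom, toUnipotentUnits]
  · refine Subtype.ext (Subtype.ext (Subtype.ext (Units.ext ?_)))
    ext <;> simp [kerHalfTraceUpperRightHom, toUnipotentUnits]

theorem exists_unipotentUnits_mulEquiv (R : Type*) [CommRing R] [Algebra (ZMod 5) R] :
    ∃ φ₁ : Multiplicative (R × R) →* MulAut (Multiplicative (Fin 5 → R)),
    ∃ φ₂ : Multiplicative R →*
        MulAut (Multiplicative (Fin 5 → R) ⋊[φ₁] Multiplicative (R × R)),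
      Nonempty (unipotentUnits R ≃*
        (Multiplicative (Fin 5 → R) ⋊[φ₁] Multiplicative (R × R)) ⋊[φ₂] Multiplicative R) := by
  obtain ⟨_, ⟨outer⟩⟩ :=
    exists_mulEquiv_ker_semidirectProduct _ _ (lowerLeft_lowerLeftSection (R := R))
  obtain ⟨_, ⟨inner⟩⟩ := exists_mulEquiv_ker_semidirectProduct _ _
    (halfTraceUpperRight_halfTraceUpperRightSection (R := R))
  let kerEquiv := (MulEquiv.ofBijective _ (kerHalfTraceUpperRightHom_bijective (R := R))).symm
  exact ⟨_, _, ⟨outer.trans (SemidirectProduct.congr'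
    (inner.trans (SemidirectProduct.congr' kerEquiv (.refl _))) (.refl _))⟩⟩

end UnipotentUnits

end CheckerboardMatrix

/-- The group algebra `F[A × D₁₀]`, as checkerboard matrices over `F[A]`. -/
noncomputable def prodDihedralRingEquiv (F A : Type*) [CommRing F] [Algebra (ZMod 5) F]
    [CommGroup A] :
    MonoidAlgebra F (A × DihedralGroup 5) ≃+* CheckerboardMatrix (MonoidAlgebra F A) :=
  (MonoidAlgebra.mapDomainRingEquiv F (.prodComm (M := A) (N := DihedralGroup 5))).trans <|
    MonoidAlgebra.curryRingEquiv.trans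
      (CheckerboardMatrix.dihedralAlgEquiv (MonoidAlgebra F A)).toRingEquiv

theorem exists_oneAddJacobson_prod_dihedral_mulEquiv (F A : Type*) [Field F] [Algebra (ZMod 5) F]
    [CommGroup A] [Finite A] [NeZero (Nat.card A : F)] :
    let R := MonoidAlgebra F A
    ∃ φ₁ : Multiplicative (R × R) →* MulAut (Multiplicative (Fin 5 → R)),
    ∃ φ₂ : Multiplicative R →*
        MulAut (Multiplicative (Fin 5 → R) ⋊[φ₁] Multiplicative (R × R)),
      Nonempty (oneAddJacobson (MonoidAlgebra F (A × DihedralGroup 5)) ≃*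
        (Multiplicative (Fin 5 → R) ⋊[φ₁] Multiplicative (R × R)) ⋊[φ₂] Multiplicative R) := by
  obtain ⟨φ₁, φ₂, ⟨e⟩⟩ := CheckerboardMatrix.exists_unipotentUnits_mulEquiv (MonoidAlgebra F A)
  rw [← CheckerboardMatrix.oneAddJacobson_eq_unipotentUnits] at e
  exact ⟨φ₁, φ₂, ⟨(oneAddJacobsonCongr (prodDihedralRingEquiv F A)).trans e⟩⟩

theorem stmt_14_general (F A : Type*) [Field F] [CharP F 5] [CommGroup A] (n k : ℕ)
    (hF : Nat.card F = 5 ^ k) (hA : Nat.card A = n) (hn : ¬ 5 ∣ n) :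
    ∃ φ₁ : (Fin (2 * n * k) → Multiplicative (ZMod 5)) →*
        MulAut (Fin (5 * n * k) → Multiplicative (ZMod 5)),
    ∃ φ₂ : (Fin (n * k) → Multiplicative (ZMod 5)) →*
        MulAut ((Fin (5 * n * k) → Multiplicative (ZMod 5)) ⋊[φ₁]
          (Fin (2 * n * k) → Multiplicative (ZMod 5))),
      Nonempty (oneAddJacobson (MonoidAlgebra F (A × DihedralGroup 5)) ≃*
        ((Fin (5 * n * k) → Multiplicative (ZMod 5)) ⋊[φ₁]
            (Fin (2 * n * k) → Multiplicative (ZMod 5))) ⋊[φ₂]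
          (Fin (n * k) → Multiplicative (ZMod 5))) := by
  let := ZMod.algebra F 5
  have : Fact (Nat.Prime 5) := ⟨Nat.prime_five⟩
  have : Finite A := Nat.finite_of_card_ne_zero fun h ↦ hn (by simp [← hA, h])
  have : NeZero (Nat.card A : F) := ⟨by rwa [hA, Ne, CharP.cast_eq_zero_iff F 5]⟩
  have hR : Nat.card (MonoidAlgebra F A) = 5 ^ (n * k) := by
    rw [natCard_monoidAlgebra, hF, hA, ← pow_mul, mul_comm]
  obtain ⟨e₁⟩ := nonempty_multiplicative_mulEquiv_pi_zmod (p := 5) (m := 5 * n * k)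
    (Fin 5 → MonoidAlgebra F A) (by rw [Nat.card_fun, hR, Nat.card_fin]; ring)
  obtain ⟨e₂⟩ := nonempty_multiplicative_mulEquiv_pi_zmod (p := 5) (m := 2 * n * k)
    (MonoidAlgebra F A × MonoidAlgebra F A) (by rw [Nat.card_prod, hR]; ring)
  obtain ⟨e₃⟩ := nonempty_multiplicative_mulEquiv_pi_zmod (MonoidAlgebra F A) hR
  obtain ⟨_, _, ⟨e⟩⟩ := exists_oneAddJacobson_prod_dihedral_mulEquiv F A
  exact ⟨_, _, ⟨e.trans (SemidirectProduct.congr' (SemidirectProduct.congr' e₁ e₂) e₃)⟩⟩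

/-- For `F` a finite field with `5^k` elements and `G = C₃ × D₁₀`, the group
`V = 1 + J(FG)` is isomorphic to an iterated semidirect product
`(C₅^(15k) ⋊ C₅^(6k)) ⋊ C₅^(3k)`. -/
theorem stmt_14 (F : Type) [Field F] [Fintype F] (k : ℕ) (hk : 0 < k)
    (hchar : CharP F 5) (hcard : Fintype.card F = 5 ^ k) :
    let G := Multiplicative (ZMod 3) × DihedralGroup 5
    ∃ H : Subgroup (MonoidAlgebra F G)ˣ,
      (∀ u : (MonoidAlgebra F G)ˣ,
        u ∈ H ↔ (u : MonoidAlgebra F G) - 1 ∈ Ideal.jacobson (⊥ : Ideal (MonoidAlgebra F G))) ∧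
      ∃ φ₁ : (Fin (6 * k) → Multiplicative (ZMod 5)) →*
              MulAut (Fin (15 * k) → Multiplicative (ZMod 5)),
      ∃ φ₂ : (Fin (3 * k) → Multiplicative (ZMod 5)) →*
              MulAut ((Fin (15 * k) → Multiplicative (ZMod 5)) ⋊[φ₁]
                      (Fin (6 * k) → Multiplicative (ZMod 5))),
        Nonempty (H ≃*
          ((Fin (15 * k) → Multiplicative (ZMod 5)) ⋊[φ₁]
              (Fin (6 * k) → Multiplicative (ZMod 5))) ⋊[φ₂]
            (Fin (3 * k) → Multiplicative (ZMod 5))) :=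
  ⟨oneAddJacobson _, fun _ ↦ mem_oneAddJacobson,
    stmt_14_general F (Multiplicative (ZMod 3)) 3 k (by simpa using hcard) (by simp) (by decide)⟩
end

section
/- Let F be a finite field of characteristic p > 5 with |F| = q ≡ 1 or 19 (mod 30), and G = C_3 × D_10. Then the group algebra FG is semisimple and FG ≅ F⁶ ⊕ M₂(F)⁶ as F-algebras. -/
/-!
An algebra homomorphism `F[G] → A` is injective as soon as some linear form on `A` restricts on `G`
to a nonzero multiple of the regular character, and it is then bijective if `dim A = |G|`.

For a cyclic group of order `m` this applies to the `m` characters given by a primitive `m`-th root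
of unity in `F`. For the dihedral group of order `2n`, with `n = 2k + 1`, it applies to two linear
characters and `k` representations of dimension 2, in which the rotation has eigenvalues `ζʲ` and
`ζ⁻ʲ`. The latter are defined over `F` as soon as `ζ + ζ⁻¹ ∈ F`, although `ζ` may only live in an
extension. The product group is handled by `F[C × D] ≅ F[C] ⊗ F[D]`.

If `F` has `q` elements and `q ≡ ±1 (mod n)`, then the Frobenius `x ↦ x ^ q` maps `ζ` to `ζ^{±1}`,
so it fixes `ζ + ζ⁻¹`, which therefore lies in `F`.
-/

open Polynomial TensorProduct

section RegularTrace

variable {F G A : Type*} [Group G] [Ring A]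

theorem lift_injective_of_trace [CommRing F] [NoZeroDivisors F] [Algebra F A] (ρ : G →* A)
    (τ : A →ₗ[F] F) (hτ_one : τ 1 ≠ 0) (hτ : ∀ g ≠ 1, τ (ρ g) = 0) :
    Function.Injective (MonoidAlgebra.lift F A G ρ) := by
  have trace_lift (x : MonoidAlgebra F G) :
      τ (MonoidAlgebra.lift F A G ρ x) = x.coeff 1 * τ 1 := by
    induction x using MonoidAlgebra.induction_linear with
    | zero => simp
    | add x y hx hy => simp [hx, hy, add_mul]
    | single g c =>
      by_cases hg : g = 1
      · simp [hg]
      · simp [hg, hτ g hg]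
  rw [injective_iff_map_eq_zero]
  intro x hx
  ext g
  have := trace_lift (x * MonoidAlgebra.single g⁻¹ 1)
  simpa [hx, hτ_one] using this

theorem lift_bijective_of_trace [Finite G] [Field F] [Algebra F A]
    (hdim : Module.finrank F A = Nat.card G) (ρ : G →* A) (τ : A →ₗ[F] F) (hτ_one : τ 1 ≠ 0)
    (hτ : ∀ g ≠ 1, τ (ρ g) = 0) :
    Function.Bijective (MonoidAlgebra.lift F A G ρ) := by
  have hinj := lift_injective_of_trace ρ τ hτ_one hτ
  have : Module.Finite F A := Module.finite_of_finrank_pos (hdim ▸ Nat.card_pos)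
  have hfinrank : Module.finrank F (MonoidAlgebra F G) = Module.finrank F A := by
    rw [hdim, Module.finrank_eq_nat_card_basis (MonoidAlgebra.basis G F)]
  exact ⟨hinj, (LinearMap.injective_iff_surjective_of_finrank_eq_finrank
    (f := (MonoidAlgebra.lift F A G ρ).toLinearMap) hfinrank).1 hinj⟩

end RegularTrace

section PowerHom

variable {M : Type*} [Monoid M] {n : ℕ} [NeZero n] {x y : M}

theorem pow_zmod_val_add (hx : x ^ n = 1) (i j : ZMod n) :
    x ^ (i + j).val = x ^ i.val * x ^ j.val := by
  rw [ZMod.val_add, ← pow_add, ← pow_eq_pow_mod _ hx]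

/-- The homomorphism from the cyclic group of order `n` sending the generator to `x`. -/
def cyclicHom (x : M) (hx : x ^ n = 1) : Multiplicative (ZMod n) →* M where
  toFun i := x ^ i.toAdd.val
  map_one' := by simp
  map_mul' i j := pow_zmod_val_add hx i.toAdd j.toAdd

theorem pow_mul_mul_pow_eq (hxy : x * y * x = y) (i : ℕ) : x ^ i * y * x ^ i = y := by
  induction i with
  | zero => simp
  | succ i ih =>
    calc x ^ (i + 1) * y * x ^ (i + 1) = x ^ i * (x * y * x) * x ^ i := by
          nth_rw 1 [pow_succ]
          simp only [pow_succ', mul_assoc]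
      _ = y := by rw [hxy, ih]

theorem pow_zmod_val_mul_mul_pow (hx : x ^ n = 1) (hxy : x * y * x = y) (i j : ZMod n) :
    x ^ i.val * (y * x ^ j.val) = y * x ^ (j - i).val := by
  conv_lhs => rw [← add_sub_cancel i j, pow_zmod_val_add hx, ← mul_assoc, ← mul_assoc,
    pow_mul_mul_pow_eq hxy]

/-- The homomorphism from the dihedral group of order `2 * n` sending the rotation `r 1` to `x` and
the reflection `sr 0` to `y`. -/
def dihedralHom (x y : M) (hx : x ^ n = 1) (hy : y * y = 1) (hxy : x * y * x = y) :
    DihedralGroup n →* M where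
  toFun
    | .r i => x ^ i.val
    | .sr i => y * x ^ i.val
  map_one' := by simp [DihedralGroup.one_def, -DihedralGroup.r_zero]
  map_mul' := by
    rintro (i | i) (j | j)
    · exact pow_zmod_val_add hx i j
    · exact (pow_zmod_val_mul_mul_pow hx hxy i j).symm
    · simp only [DihedralGroup.sr_mul_r, pow_zmod_val_add hx, mul_assoc]
    · simp only [DihedralGroup.sr_mul_sr, mul_assoc, pow_zmod_val_mul_mul_pow hx hxy]
      rw [← mul_assoc, hy, one_mul]

theorem dihedralHom_r (hx : x ^ n = 1) (hy : y * y = 1) (hxy : x * y * x = y) (i : ZMod n) :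
    dihedralHom x y hx hy hxy (.r i) = x ^ i.val :=
  rfl

theorem dihedralHom_sr (hx : x ^ n = 1) (hy : y * y = 1) (hxy : x * y * x = y) (i : ZMod n) :
    dihedralHom x y hx hy hxy (.sr i) = y * x ^ i.val :=
  rfl

end PowerHom

section RootsOfUnity

theorem geom_sum_eq_zero_of_pow_eq_one {R : Type*} [Ring R] [NoZeroDivisors R] {x : R} {n : ℕ}
    (hx : x ^ n = 1) (hx_ne : x ≠ 1) : ∑ l ∈ Finset.range n, x ^ l = 0 := by
  have := geom_sum_mul x n
  rw [hx, sub_self] at this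
  exact (mul_eq_zero.1 this).resolve_right (sub_ne_zero.2 hx_ne)

theorem geom_sum_odd_eq {R : Type*} [CommRing R] {x y : R} {k : ℕ} (hxy : x * y = 1)
    (hx : x ^ (2 * k + 1) = 1) :
    ∑ l ∈ Finset.range (2 * k + 1), x ^ l =
      1 + ∑ j ∈ Finset.range k, (x ^ (j + 1) + y ^ (j + 1)) := by
  have pow_reflect (j : ℕ) (hj : j ∈ Finset.range k) : x ^ (k + (k - 1 - j) + 1) = y ^ (j + 1) := by
    have hjk := Finset.mem_range.1 hj
    calc x ^ (k + (k - 1 - j) + 1) = x ^ (k + (k - 1 - j) + 1) * (x * y) ^ (j + 1) := by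
          rw [hxy, one_pow, mul_one]
      _ = x ^ (k + (k - 1 - j) + 1 + (j + 1)) * y ^ (j + 1) := by ring
      _ = y ^ (j + 1) := by
          rw [show k + (k - 1 - j) + 1 + (j + 1) = 2 * k + 1 by omega, hx, one_mul]
  rw [Finset.sum_range_succ', pow_zero, add_comm, two_mul, Finset.sum_range_add,
    ← Finset.sum_range_reflect (fun j ↦ x ^ (k + j + 1)), Finset.sum_congr rfl pow_reflect,
    ← Finset.sum_add_distrib]

theorem pow_zmod_val_ne_one {M : Type*} [CommMonoid M] {n : ℕ} [NeZero n] {ζ : M}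
    (hζ : IsPrimitiveRoot ζ n) {i : ZMod n} (hi : i ≠ 0) : ζ ^ i.val ≠ 1 :=
  hζ.pow_ne_one_of_pos_of_lt (mt (ZMod.val_eq_zero i).1 hi) i.val_lt

end RootsOfUnity

theorem nonempty_algEquiv_cyclic {F : Type*} [Field F] {m : ℕ} [NeZero m] {ω : F}
    (hω : IsPrimitiveRoot ω m) :
    Nonempty (MonoidAlgebra F (Multiplicative (ZMod m)) ≃ₐ[F] (Fin m → F)) := by
  have hm : (m : F) ≠ 0 := hω.neZero'.ne
  have powers_pow : (fun l : Fin m ↦ ω ^ (l : ℕ)) ^ m = 1 := by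
    funext l
    simp [← pow_mul', pow_mul, hω.pow_eq_one]
  refine ⟨.ofBijective _ (lift_bijective_of_trace (by simp) (cyclicHom _ powers_pow)
    (∑ l, LinearMap.proj l) (by simpa using hm) fun a ha ↦ ?_)⟩
  calc (∑ l : Fin m, LinearMap.proj (R := F) l) (cyclicHom _ powers_pow a)
      = ∑ l ∈ Finset.range m, (ω ^ a.toAdd.val) ^ l := by
        simp [cyclicHom, Finset.sum_range, pow_right_comm]
    _ = 0 := geom_sum_eq_zero_of_pow_eq_one (by rw [pow_right_comm, hω.pow_eq_one, one_pow])
        (pow_zmod_val_ne_one hω ha)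

section RotationMatrix

variable {R : Type*} [CommRing R]

/-- The element of `SL₂` of trace `t` with first column `(0, 1)`. It plays the role of the rotation
with eigenvalues `x` and `x⁻¹` for `t = x + x⁻¹`, and has entries in `R` even if `x` does not lie in
`R`. -/
def rotationMatrix (t : R) : Matrix (Fin 2) (Fin 2) R :=
  !![0, -1; 1, t]

/-- The permutation matrix exchanging the two coordinates. It inverts every `rotationMatrix t` by
conjugation, and is the image of a reflection in the two-dimensional dihedral representations. -/
def swapMatrix : Matrix (Fin 2) (Fin 2) R :=
  !![0, 1; 1, 0]

theorem swapMatrix_mul_self : (swapMatrix : Matrix (Fin 2) (Fin 2) R) * swapMatrix = 1 := by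
  simp [swapMatrix, Matrix.one_fin_two]

theorem rotationMatrix_mul_swapMatrix_mul_rotationMatrix (t : R) :
    rotationMatrix t * swapMatrix * rotationMatrix t = swapMatrix := by
  simp [rotationMatrix, swapMatrix]

theorem trace_swapMatrix_mul_of_commute {t : R} {M : Matrix (Fin 2) (Fin 2) R}
    (hM : Commute M (rotationMatrix t)) : (swapMatrix * M).trace = 0 := by
  have hentry : M 0 1 = -M 1 0 := by
    simpa [rotationMatrix, Matrix.mul_apply] using congr_fun₂ hM.eq 0 0
  simp [swapMatrix, Matrix.trace_fin_two, Matrix.vecMul, dotProduct, hentry]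

theorem rotationMatrix_sq (t : R) : rotationMatrix t ^ 2 = t • rotationMatrix t - 1 := by
  rw [sq]
  simp [rotationMatrix, Matrix.one_fin_two, sub_eq_neg_add]

theorem trace_rotationMatrix_pow {x y : R} (hxy : x * y = 1) (i : ℕ) :
    (rotationMatrix (x + y) ^ i).trace = x ^ i + y ^ i := by
  induction i using Nat.twoStepInduction with
  | zero => simp [one_add_one_eq_two]
  | one => simp [rotationMatrix, Matrix.trace_fin_two]
  | more i ih₀ ih₁ =>
    have hrec : rotationMatrix (x + y) ^ (i + 2) =
        (x + y) • rotationMatrix (x + y) ^ (i + 1) - rotationMatrix (x + y) ^ i := by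
      rw [pow_add, rotationMatrix_sq, mul_sub, mul_smul_comm, ← pow_succ, mul_one]
    rw [hrec, Matrix.trace_sub, Matrix.trace_smul, ih₀, ih₁, smul_eq_mul]
    linear_combination (x ^ i + y ^ i) * hxy

theorem rotationMatrix_pow_eq_one {K : Type*} [Field K] {x y : K} {n : ℕ} (hxy : x * y = 1)
    (hne : x ≠ y) (hx : x ^ n = 1) : rotationMatrix (x + y) ^ n = 1 := by
  have hy : y ^ n = 1 := by simpa [mul_pow, hx] using congr($hxy ^ n)
  have hdvd : (X - C x) * (X - C y) ∣ (X ^ n - 1 : K[X]) :=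
    (isCoprime_X_sub_C_of_isUnit_sub (sub_ne_zero.2 hne).isUnit).mul_dvd
      (dvd_iff_isRoot.2 (by simp [hx])) (dvd_iff_isRoot.2 (by simp [hy]))
  have haeval : aeval (rotationMatrix (x + y)) ((X - C x) * (X - C y)) = 0 := by
    have hexpand : (X - C x) * (X - C y) = X ^ 2 - C (x + y) * X + 1 := by
      rw [← C_1, ← hxy, C_add, C_mul]
      ring
    simp [hexpand, rotationMatrix_sq, Algebra.smul_def]
  have := zero_dvd_iff.1 (haeval ▸ map_dvd (aeval (rotationMatrix (x + y))) hdvd)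
  exact sub_eq_zero.1 (by simpa using this)

theorem map_rotationMatrix {S : Type*} [CommRing S] (f : R →+* S) (t : R) :
    f.mapMatrix (rotationMatrix t) = rotationMatrix (f t) := by
  ext i j
  fin_cases i <;> fin_cases j <;> simp [rotationMatrix]

end RotationMatrix

section RealRoots

variable {F K : Type*} [Field F] [Field K] [Algebra F K]

theorem pow_add_inv_pow_mem_range {ζ : K} (hζ : ζ ≠ 0)
    (hreal : ζ + ζ⁻¹ ∈ (algebraMap F K).range) (j : ℕ) :
    ζ ^ j + ζ⁻¹ ^ j ∈ (algebraMap F K).range := by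
  obtain ⟨t, ht⟩ := hreal
  refine ⟨(dickson 1 1 j).eval t, ?_⟩
  rw [← dickson_one_one_eval_add_inv ζ ζ⁻¹ (mul_inv_cancel₀ hζ), ← ht, ← eval_map_apply,
    map_dickson, map_one]

theorem pow_ne_inv_pow_of_odd {k j : ℕ} {ζ : K} (hζ : IsPrimitiveRoot ζ (2 * k + 1)) (hj : j < k) :
    ζ ^ (j + 1) ≠ ζ⁻¹ ^ (j + 1) := by
  intro heq
  have hsq : ζ ^ (2 * (j + 1)) = 1 := by
    rw [two_mul, pow_add]
    nth_rw 1 [heq]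
    rw [← mul_pow, inv_mul_cancel₀ (hζ.ne_zero (by omega)), one_pow]
  exact hζ.pow_ne_one_of_pos_of_lt (by omega) (by omega) hsq

theorem natCast_ne_zero_of_isPrimitiveRoot {n : ℕ} [NeZero n] {ζ : K} (hζ : IsPrimitiveRoot ζ n) :
    (n : F) ≠ 0 := by
  rw [← (algebraMap F K).injective.ne_iff, map_natCast, map_zero]
  exact hζ.neZero'.ne

end RealRoots

/-- The algebra `R² × M₂(R)ᵏ`, whose factors are the images of the two linear characters and the `k`
two-dimensional representations of the dihedral group of order `2 * (2 * k + 1)`. -/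
abbrev DihedralBlocks (R : Type*) (k : ℕ) : Type _ :=
  (Fin 2 → R) × (Fin k → Matrix (Fin 2) (Fin 2) R)

namespace DihedralBlocks

section CommRing

variable {R : Type*} [CommRing R] {k : ℕ}

/-- The image of the generating rotation when it has trace `t j` in the `j`-th two-dimensional
representation. -/
def rotation (t : Fin k → R) : DihedralBlocks R k :=
  (1, fun j ↦ rotationMatrix (t j))

variable (R k) in
/-- The image of the generating reflection. -/
def reflection : DihedralBlocks R k :=
  (![1, -1], fun _ ↦ swapMatrix)

variable (R k) in
/-- The sum of the traces of all blocks, each weighted by its size. Along an isomorphism from the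
group algebra this is the regular character. -/
noncomputable def regularTrace : DihedralBlocks R k →ₗ[R] R :=
  (∑ i, LinearMap.proj i).coprod (2 • ∑ j, Matrix.traceLinearMap (Fin 2) R R ∘ₗ LinearMap.proj j)

theorem regularTrace_apply (a : DihedralBlocks R k) :
    regularTrace R k a = a.1 0 + a.1 1 + 2 * ∑ j, (a.2 j).trace := by
  simp [regularTrace]

theorem regularTrace_one : regularTrace R k 1 = 2 * (2 * k + 1 : ℕ) := by
  simp only [regularTrace_apply, Prod.fst_one, Prod.snd_one, Pi.one_apply, Matrix.trace_one,
    Fintype.card_fin, Finset.sum_const, Finset.card_univ, nsmul_eq_mul, Nat.cast_add, Nat.cast_mul,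
    Nat.cast_ofNat, Nat.cast_one]
  ring

theorem finrank_eq [Nontrivial R] :
    Module.finrank R (DihedralBlocks R k) = Nat.card (DihedralGroup (2 * k + 1)) := by
  rw [DihedralGroup.nat_card, Module.finrank_prod, Module.finrank_pi_fintype,
    Module.finrank_pi_fintype]
  simp only [Module.finrank_self, Module.finrank_matrix, Finset.sum_const, Finset.card_univ,
    Fintype.card_fin, smul_eq_mul]
  ring

theorem reflection_mul_self : reflection R k * reflection R k = 1 := by
  refine Prod.ext (funext fun i ↦ ?_) (funext fun _ ↦ swapMatrix_mul_self)
  fin_cases i <;> simp [reflection]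

theorem rotation_mul_reflection_mul_rotation (t : Fin k → R) :
    rotation t * reflection R k * rotation t = reflection R k := by
  ext <;> simp [rotation, reflection, rotationMatrix_mul_swapMatrix_mul_rotationMatrix]

theorem regularTrace_reflection_mul_rotation_pow (t : Fin k → R) (i : ℕ) :
    regularTrace R k (reflection R k * rotation t ^ i) = 0 := by
  have hblock (j : Fin k) : (swapMatrix * rotationMatrix (t j) ^ i).trace = 0 :=
    trace_swapMatrix_mul_of_commute ((Commute.refl _).pow_left i)
  simp [regularTrace_apply, reflection, rotation, hblock]

end CommRing

section Field

variable {F K : Type*} [Field F] [Field K] [Algebra F K] {k : ℕ} {ζ : K} {t : Fin k → F}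

theorem rotation_pow_eq_one (hζ : IsPrimitiveRoot ζ (2 * k + 1))
    (ht : ∀ j, algebraMap F K (t j) = ζ ^ (j + 1 : ℕ) + ζ⁻¹ ^ (j + 1 : ℕ)) :
    rotation t ^ (2 * k + 1) = 1 := by
  have hblock (j : Fin k) : rotationMatrix (t j) ^ (2 * k + 1) = 1 := by
    apply Matrix.map_injective (algebraMap F K).injective
    have hζ0 : ζ ≠ 0 := hζ.ne_zero (by omega)
    change (algebraMap F K).mapMatrix _ = (algebraMap F K).mapMatrix _
    rw [map_pow, map_one, map_rotationMatrix, ht]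
    refine rotationMatrix_pow_eq_one (by rw [← mul_pow, mul_inv_cancel₀ hζ0, one_pow])
      (pow_ne_inv_pow_of_odd hζ j.2) ?_
    rw [pow_right_comm, hζ.pow_eq_one, one_pow]
  ext <;> simp [rotation, hblock]

theorem algebraMap_regularTrace_rotation_pow (hζ : ζ ^ (2 * k + 1) = 1)
    (ht : ∀ j, algebraMap F K (t j) = ζ ^ (j + 1 : ℕ) + ζ⁻¹ ^ (j + 1 : ℕ))
    (i : ℕ) :
    algebraMap F K (regularTrace F k (rotation t ^ i)) =
      2 * ∑ l ∈ Finset.range (2 * k + 1), (ζ ^ i) ^ l := by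
  have hinv : ζ * ζ⁻¹ = 1 := mul_inv_cancel₀ (by rintro rfl; simp at hζ)
  have hblock (j : Fin k) : algebraMap F K (rotationMatrix (t j) ^ i).trace =
      (ζ ^ i) ^ (j + 1 : ℕ) + (ζ⁻¹ ^ i) ^ (j + 1 : ℕ) := by
    rw [AddMonoidHom.map_trace]
    change ((algebraMap F K).mapMatrix _).trace = _
    rw [map_pow, map_rotationMatrix, ht,
      trace_rotationMatrix_pow (by rw [← mul_pow, hinv, one_pow]), pow_right_comm,
      pow_right_comm ζ⁻¹]
  rw [geom_sum_odd_eq (y := ζ⁻¹ ^ i) (by rw [← mul_pow, hinv, one_pow])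
    (by rw [pow_right_comm, hζ, one_pow]), Finset.sum_range]
  simp only [regularTrace_apply, rotation, Prod.pow_fst, Prod.pow_snd, Pi.pow_apply,
    Pi.one_apply, one_pow, map_add, map_mul, map_sum, map_one, map_ofNat, hblock]
  ring

end Field

end DihedralBlocks

open DihedralBlocks in
theorem nonempty_algEquiv_dihedral {F K : Type*} [Field F] [Field K] [Algebra F K] {k : ℕ} {ζ : K}
    (h2 : (2 : F) ≠ 0) (hζ : IsPrimitiveRoot ζ (2 * k + 1))
    (hreal : ζ + ζ⁻¹ ∈ (algebraMap F K).range) :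
    Nonempty (MonoidAlgebra F (DihedralGroup (2 * k + 1)) ≃ₐ[F] DihedralBlocks F k) := by
  choose t ht using fun j : Fin k ↦
    pow_add_inv_pow_mem_range (hζ.ne_zero (by omega)) hreal (j + 1)
  let ρ := dihedralHom (rotation t) (reflection F k) (rotation_pow_eq_one hζ ht)
    reflection_mul_self (rotation_mul_reflection_mul_rotation t)
  have htrace_one : regularTrace F k 1 ≠ 0 := by
    rw [regularTrace_one]
    exact mul_ne_zero h2 (natCast_ne_zero_of_isPrimitiveRoot hζ)
  refine ⟨.ofBijective _ (lift_bijective_of_trace finrank_eq ρ (regularTrace F k) htrace_one ?_)⟩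
  rintro (i | i) hi
  · have hi : i ≠ 0 := by rintro rfl; exact hi DihedralGroup.r_zero
    apply (algebraMap F K).injective
    rw [dihedralHom_r, algebraMap_regularTrace_rotation_pow hζ.pow_eq_one ht,
      geom_sum_eq_zero_of_pow_eq_one (by rw [pow_right_comm, hζ.pow_eq_one, one_pow])
        (pow_zmod_val_ne_one hζ hi), mul_zero, map_zero]
  · rw [dihedralHom_sr, regularTrace_reflection_mul_rotation_pow]

section Product

/-- The group algebra of a product is the tensor product of the group algebras; this upgrades
`MonoidAlgebra.tensorEquiv` to an isomorphism of algebras. -/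
noncomputable def monoidAlgebraProdAlgEquivTensor (R M N : Type*) [CommSemiring R] [Monoid M]
    [Monoid N] :
    MonoidAlgebra R (M × N) ≃ₐ[R] MonoidAlgebra R M ⊗[R] MonoidAlgebra R N :=
  let ofTensor : M × N →* MonoidAlgebra R M ⊗[R] MonoidAlgebra R N :=
    { toFun g := MonoidAlgebra.of R M g.1 ⊗ₜ MonoidAlgebra.of R N g.2
      map_one' := by simp [Algebra.TensorProduct.one_def, MonoidAlgebra.one_def]
      map_mul' := by simp }
  .ofBijective (MonoidAlgebra.lift R _ (M × N) ofTensor) <| by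
    have hlift : (MonoidAlgebra.lift R _ (M × N) ofTensor).toLinearMap =
        (MonoidAlgebra.tensorEquiv R).symm.toLinearMap := by
      ext g
      simp [ofTensor, MonoidAlgebra.tensorEquiv_symm_single_eq_single_one_tmul]
    exact congr(Function.Bijective $hlift).mpr (MonoidAlgebra.tensorEquiv R).symm.bijective

/-- Distributing a power over a product of powers, `(Aᵅ × Bᵝ)ᶥ ≃ A^(ι × α) × B^(ι × β)`. -/
def piProdFunAlgEquiv (R ι α β A B : Type*) [CommSemiring R] [Semiring A] [Semiring B] [Algebra R A]
    [Algebra R B] :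
    (ι → (α → A) × (β → B)) ≃ₐ[R] (ι × α → A) × (ι × β → B) where
  toFun f := (fun i ↦ (f i.1).1 i.2, fun i ↦ (f i.1).2 i.2)
  invFun g i := (fun a ↦ g.1 (i, a), fun b ↦ g.2 (i, b))
  left_inv _ := rfl
  right_inv _ := rfl
  map_mul' _ _ := rfl
  map_add' _ _ := rfl
  commutes' _ := rfl

end Product

theorem isSemisimpleRing_and_nonempty_algEquiv_cyclic_prod_dihedral {F K : Type*} [Field F]
    [Field K] [Algebra F K] {m k : ℕ} [NeZero m] (h2 : (2 : F) ≠ 0) {ω : F}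
    (hω : IsPrimitiveRoot ω m) {ζ : K} (hζ : IsPrimitiveRoot ζ (2 * k + 1))
    (hreal : ζ + ζ⁻¹ ∈ (algebraMap F K).range) :
    let G := Multiplicative (ZMod m) × DihedralGroup (2 * k + 1)
    IsSemisimpleRing (MonoidAlgebra F G) ∧
    Nonempty (MonoidAlgebra F G ≃ₐ[F]
      ((Fin (m * 2) → F) × (Fin (m * k) → Matrix (Fin 2) (Fin 2) F))) := by
  intro G
  obtain ⟨cyclicEquiv⟩ := nonempty_algEquiv_cyclic hω
  obtain ⟨dihedralEquiv⟩ := nonempty_algEquiv_dihedral h2 hζ hreal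
  constructor
  · have : NeZero (Nat.card G : F) := ⟨by
      rw [Nat.card_prod, DihedralGroup.nat_card]
      simpa [h2] using And.intro hω.neZero'.ne (natCast_ne_zero_of_isPrimitiveRoot (F := F) hζ)⟩
    infer_instance
  · exact ⟨(monoidAlgebraProdAlgEquivTensor F _ _).trans <|
      (Algebra.TensorProduct.comm F _ _).trans <|
      (Algebra.TensorProduct.congr dihedralEquiv cyclicEquiv).trans <|
      (Algebra.TensorProduct.piScalarRight F F _ (Fin m)).trans <|
      (piProdFunAlgEquiv F (Fin m) (Fin 2) (Fin k) _ _).trans <|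
      (AlgEquiv.piCongrLeft' F _ finProdFinEquiv).prodCongr
        (AlgEquiv.piCongrLeft' F _ finProdFinEquiv)⟩

section FiniteField

variable {F K : Type*} [Field F] [Fintype F] [Field K] [Algebra F K]

theorem natCast_ne_zero_of_coprime_card {d : ℕ} (hd : d.Coprime (Fintype.card F)) :
    (d : F) ≠ 0 := by
  have := hd.cast (R := F)
  rw [FiniteField.cast_card_eq_zero, isCoprime_zero_right] at this
  exact this.ne_zero

theorem exists_isPrimitiveRoot_of_dvd_card_sub_one {m : ℕ} (hm : m ∣ Fintype.card F - 1) :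
    ∃ ω : F, IsPrimitiveRoot ω m := by
  obtain ⟨g, hg⟩ := IsCyclic.exists_ofOrder_eq_natCard (α := Fˣ)
  obtain ⟨d, hd⟩ := hm
  have hcard : Nat.card Fˣ = d * m := by
    rw [Nat.card_units, Nat.card_eq_fintype_card, hd, mul_comm]
  have hprim := (hg ▸ IsPrimitiveRoot.orderOf g).pow Nat.card_pos hcard
  exact ⟨_, IsPrimitiveRoot.coe_units_iff.2 hprim⟩

theorem mem_range_algebraMap_of_pow_card_eq {x : K} (hx : x ^ Fintype.card F = x) :
    x ∈ (algebraMap F K).range := by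
  have hcard := Fintype.one_lt_card (α := F)
  have hsplits : (X ^ Fintype.card F - X : F[X]).Splits := by
    rw [splits_iff_card_roots, FiniteField.roots_X_pow_card_sub_X,
      FiniteField.X_pow_card_sub_X_natDegree_eq F hcard, Finset.card_val, Finset.card_univ]
  exact hsplits.mem_range_of_isRoot (FiniteField.X_pow_card_sub_X_ne_zero F hcard)
    (by simp [hx])

theorem add_inv_mem_range_algebraMap {n : ℕ} {ζ : K} (hζ : ζ ^ n = 1)
    (hn : n ∣ Fintype.card F - 1 ∨ n ∣ Fintype.card F + 1) :
    ζ + ζ⁻¹ ∈ (algebraMap F K).range := by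
  have pow_eq_one_of_dvd {d : ℕ} (hd : n ∣ d) : ζ ^ d = 1 := by
    obtain ⟨e, rfl⟩ := hd
    rw [pow_mul, hζ, one_pow]
  apply mem_range_algebraMap_of_pow_card_eq
  have hfrob : (ζ + ζ⁻¹) ^ Fintype.card F = ζ ^ Fintype.card F + (ζ ^ Fintype.card F)⁻¹ := by
    simpa using map_add (FiniteField.frobeniusAlgHom F K) ζ ζ⁻¹
  rw [hfrob]
  rcases hn with hn | hn
  · rw [← Nat.sub_add_cancel (Fintype.card_pos (α := F)), pow_succ, pow_eq_one_of_dvd hn, one_mul]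
  · have := pow_eq_one_of_dvd hn
    rw [pow_succ] at this
    rw [eq_inv_of_mul_eq_one_left this, inv_inv, add_comm]

end FiniteField

theorem stmt_16_general {F : Type*} [Field F] [Fintype F] {m k : ℕ} (hodd : Odd (Fintype.card F))
    (hm : m ∣ Fintype.card F - 1)
    (hk : 2 * k + 1 ∣ Fintype.card F - 1 ∨ 2 * k + 1 ∣ Fintype.card F + 1) :
    let G := Multiplicative (ZMod m) × DihedralGroup (2 * k + 1)
    IsSemisimpleRing (MonoidAlgebra F G) ∧
    Nonempty (MonoidAlgebra F G ≃ₐ[F]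
      ((Fin (m * 2) → F) × (Fin (m * k) → Matrix (Fin 2) (Fin 2) F))) := by
  have hcard := Fintype.one_lt_card (α := F)
  have : NeZero m := ⟨ne_zero_of_dvd_ne_zero (by omega) hm⟩
  have hcoprime : (2 * k + 1).Coprime (Fintype.card F) := by
    rcases hk with hk | hk
    · exact ((Nat.coprime_self_sub_left hcard.le).2 (Nat.coprime_one_left _)).coprime_dvd_left hk
    · exact (Nat.coprime_self_add_left.2 (Nat.coprime_one_left _)).coprime_dvd_left hk
  have : NeZero ((2 * k + 1 : ℕ) : F) := ⟨natCast_ne_zero_of_coprime_card hcoprime⟩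
  have h2 : (2 : F) ≠ 0 := natCast_ne_zero_of_coprime_card (Nat.coprime_two_left.2 hodd)
  obtain ⟨ω, hω⟩ := exists_isPrimitiveRoot_of_dvd_card_sub_one hm
  obtain ⟨ζ, hζ⟩ := HasEnoughRootsOfUnity.exists_primitiveRoot (AlgebraicClosure F) (2 * k + 1)
  exact isSemisimpleRing_and_nonempty_algEquiv_cyclic_prod_dihedral h2 hω hζ
    (add_inv_mem_range_algebraMap hζ.pow_eq_one hk)

/-- For `F` a finite field of characteristic `p > 5` with `q ≡ 1, 19 (mod 30)` and
`G = C₃ × D₁₀`, the group algebra `FG` is semisimple and `FG ≅ F⁶ ⊕ M₂(F)⁶` as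
`F`-algebras. -/
theorem stmt_16 (F : Type) [Field F] [Fintype F] (p : ℕ) (hchar : CharP F p) (hp : 5 < p)
    (hq : Fintype.card F % 30 = 1 ∨ Fintype.card F % 30 = 19) :
    let G := Multiplicative (ZMod 3) × DihedralGroup 5
    IsSemisimpleRing (MonoidAlgebra F G) ∧
    Nonempty (MonoidAlgebra F G ≃ₐ[F]
      ((Fin 6 → F) × (Fin 6 → Matrix (Fin 2) (Fin 2) F))) := by
  exact stmt_16_general (m := 3) (k := 2) (Nat.odd_iff.2 (by omega)) (by omega) (by omega)
end

section
/- Let F be a finite field of characteristic p > 5 with |F| = q ≡ 7 or 13 (mod 30), and G = C_3 × D_10. Then FG ≅ F⁶ ⊕ M₂(F₂)³, where F₂ is the quadratic extension of F; consequently U(FG) ≅ C_{q−1}⁶ × GL(2, F₂)³. -/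
/-!
Let `q = |F|` and let `A` be a finite abelian group whose exponent divides `q - 1`. Evaluation at
the `F`-valued characters of `A` gives `F[A] ≅ F^|A|`, hence `F[A × H] = F[A] ⊗ F[H] ≅ F[H]^|A|`.

Let `ℓ` be an odd prime for which `q` generates `(ℤ/ℓ)ˣ`, let `K/F` have degree `(ℓ - 1)/2`, and let
`L/K` be quadratic. Then `|K| ≡ -1 (mod ℓ)`, so `L` contains a primitive `ℓ`-th root of unity `ζ`
and the Frobenius `τ` of `L/K` inverts it: multiplication by `ζ` and `τ` define an action of `D_ℓ`
on `L` by `K`-linear maps. Together with the two linear characters this gives a map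
`F[D_ℓ] → F × F × End_K L`. An element of `F[D_ℓ]` is `f(r) + s g(r)` for polynomials `f`, `g`; if
it is in the kernel then `f` and `g` vanish at `1` because `2` is invertible, and at `ζ` because `1`
and `τ` are linearly independent over `L`. Since `Φ_ℓ` is irreducible over `F`, both are divisible
by `X ^ ℓ - 1`. So the map is injective, and both sides have dimension `2ℓ`.
-/

open Polynomial

open scoped TensorProduct in
/-- `MonoidAlgebra.tensorEquiv` as an isomorphism of algebras. -/
noncomputable def monoidAlgebraProdAlgEquiv (R M N : Type*) [CommSemiring R] [Monoid M] [Monoid N] :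
    MonoidAlgebra R (M × N) ≃ₐ[R] MonoidAlgebra R M ⊗[R] MonoidAlgebra R N :=
  let tmulHom : M × N →* MonoidAlgebra R M ⊗[R] MonoidAlgebra R N :=
    { toFun := fun g ↦ .of R M g.1 ⊗ₜ .of R N g.2
      map_one' := by simp only [Prod.fst_one, Prod.snd_one, map_one, Algebra.TensorProduct.one_def]
      map_mul' := fun g h ↦ by simp }
  have lift_eq : (MonoidAlgebra.lift R _ _ tmulHom).toLinearMap =
      (MonoidAlgebra.tensorEquiv R (M := M) (N := N)).symm.toLinearMap := by
    ext g
    simp [tmulHom, MonoidAlgebra.tensorEquiv_symm_single_eq_single_one_tmul]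
  .ofBijective (MonoidAlgebra.lift R _ _ tmulHom) <| by
    rw [← AlgHom.coe_toLinearMap, lift_eq]
    exact (MonoidAlgebra.tensorEquiv R).symm.bijective

theorem bijective_of_injective_of_finrank_eq_natCard {F G B : Type*} [Field F] [Monoid G]
    [Finite G] [Ring B] [Algebra F B] {φ : MonoidAlgebra F G →ₐ[F] B} (hφ : Function.Injective φ)
    (hB : Module.finrank F B = Nat.card G) : Function.Bijective φ := by
  have := Fintype.ofFinite G
  have : Module.Finite F B := Module.finite_of_finrank_pos (hB ▸ Nat.card_pos)
  have : Module.Finite F (MonoidAlgebra F G) := .equiv (MonoidAlgebra.coeffLinearEquiv F).symm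
  have finrank_eq : Module.finrank F (MonoidAlgebra F G) = Module.finrank F B := by
    rw [hB, (MonoidAlgebra.coeffLinearEquiv F).finrank_eq, Module.finrank_finsupp_self,
      Nat.card_eq_fintype_card]
  exact ⟨hφ, (LinearMap.injective_iff_surjective_of_finrank_eq_finrank
    (f := φ.toLinearMap) finrank_eq).mp hφ⟩

section SplitAbelian

section Monoid

variable (F A : Type*) [Field F] [Monoid A]

/-- Evaluation of an element of `F[A]` at all linear characters of `A` over `F`. -/
noncomputable def evalCharacters : MonoidAlgebra F A →ₐ[F] ((A →* Fˣ) → F) :=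
  AlgHom.pi fun χ ↦ MonoidAlgebra.lift F F A ((Units.coeHom F).comp χ)

theorem linearIndependent_characters :
    LinearIndependent F fun (χ : A →* Fˣ) (a : A) ↦ (χ a : F) :=
  (linearIndependent_monoidHom A F).comp (fun χ : A →* Fˣ ↦ (Units.coeHom F).comp χ)
    fun _ _ h ↦ MonoidHom.ext fun a ↦ Units.ext (DFunLike.congr_fun h a)

end Monoid

variable (F A : Type*) [Field F] [CommGroup A] [Finite A]
  [HasEnoughRootsOfUnity F (Monoid.exponent A)]

theorem span_characters_eq_top :
    Submodule.span F (Set.range fun (χ : A →* Fˣ) (a : A) ↦ (χ a : F)) = ⊤ := by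
  have := Fintype.ofFinite A
  have : Finite (A →* Fˣ) := (linearIndependent_characters F A).finite
  have := Fintype.ofFinite (A →* Fˣ)
  refine (linearIndependent_characters F A).span_eq_top_of_card_eq_finrank' ?_
  rw [Module.finrank_fintype_fun_eq_card, ← Nat.card_eq_fintype_card, ← Nat.card_eq_fintype_card,
    CommGroup.card_monoidHom_of_hasEnoughRootsOfUnity]

theorem evalCharacters_injective : Function.Injective (evalCharacters F A) := by
  classical
  have := Fintype.ofFinite A
  rw [injective_iff_map_eq_zero]
  intro x hx
  have pairing_eq_zero : Fintype.linearCombination F (x.coeff : A → F) = 0 := by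
    refine LinearMap.ext_on_range (span_characters_eq_top F A) fun χ ↦ ?_
    have hχ : MonoidAlgebra.lift F F A ((Units.coeHom F).comp χ) x = 0 := congrFun hx χ
    rw [MonoidAlgebra.lift_apply, Finsupp.sum_fintype _ _ (by simp)] at hχ
    simpa [Fintype.linearCombination_apply, mul_comm] using hχ
  ext a
  simpa using LinearMap.congr_fun pairing_eq_zero (Pi.single a 1)

theorem evalCharacters_bijective : Function.Bijective (evalCharacters F A) := by
  have : Finite (A →* Fˣ) := (linearIndependent_characters F A).finite
  have := Fintype.ofFinite (A →* Fˣ)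
  refine bijective_of_injective_of_finrank_eq_natCard (evalCharacters_injective F A) ?_
  rw [Module.finrank_fintype_fun_eq_card, ← Nat.card_eq_fintype_card,
    CommGroup.card_monoidHom_of_hasEnoughRootsOfUnity]

theorem nonempty_prod_algEquiv_characters_pi (H : Type*) [Monoid H] :
    Nonempty (MonoidAlgebra F (A × H) ≃ₐ[F] ((A →* Fˣ) → MonoidAlgebra F H)) := by
  classical
  have : Finite (A →* Fˣ) := (linearIndependent_characters F A).finite
  have := Fintype.ofFinite (A →* Fˣ)
  exact ⟨(monoidAlgebraProdAlgEquiv F A H).trans <|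
    (Algebra.TensorProduct.congr (.ofBijective _ (evalCharacters_bijective F A)) .refl).trans <|
    (Algebra.TensorProduct.comm F _ _).trans <|
    Algebra.TensorProduct.piScalarRight F F _ _⟩

end SplitAbelian

section Dihedral

section Lift

variable {M : Type*} [Monoid M] {n : ℕ}

theorem pow_val_add [NeZero n] {ρ : M} (hρ : ρ ^ n = 1) (i j : ZMod n) :
    ρ ^ (i + j).val = ρ ^ i.val * ρ ^ j.val := by
  rw [← pow_add, ZMod.val_add, ← pow_eq_pow_mod _ hρ]

theorem pow_mul_mul_pow {ρ σ : M} (hρσ : ρ * σ * ρ = σ) (k : ℕ) : ρ ^ k * σ * ρ ^ k = σ := by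
  induction k with
  | zero => simp
  | succ k ih =>
    calc ρ ^ (k + 1) * σ * ρ ^ (k + 1) = (ρ ^ k * ρ) * σ * (ρ * ρ ^ k) := by
          rw [← pow_succ, ← pow_succ']
      _ = ρ ^ k * (ρ * σ * ρ) * ρ ^ k := by simp only [mul_assoc]
      _ = σ := by rw [hρσ, ih]

theorem pow_val_mul [NeZero n] {ρ σ : M} (hρ : ρ ^ n = 1) (hρσ : ρ * σ * ρ = σ) (i : ZMod n) :
    ρ ^ i.val * σ = σ * ρ ^ (-i).val :=
  calc ρ ^ i.val * σ = ρ ^ i.val * σ * ρ ^ (i + -i).val := by simp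
    _ = σ * ρ ^ (-i).val := by rw [pow_val_add hρ, ← mul_assoc, pow_mul_mul_pow hρσ]

variable [NeZero n]

/-- The homomorphism out of the dihedral group given by its presentation
`⟨ρ, σ | ρⁿ = σ² = 1, ρσρ = σ⟩`, with `ρ = r 1` and `σ = sr 0`. -/
def dihedralLift (ρ σ : M) (hρ : ρ ^ n = 1) (hσ : σ * σ = 1) (hρσ : ρ * σ * ρ = σ) :
    DihedralGroup n →* M where
  toFun
    | .r i => ρ ^ i.val
    | .sr i => σ * ρ ^ i.val
  map_one' := by simp [DihedralGroup.one_def, -DihedralGroup.r_zero]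
  map_mul' := by
    rintro (i | i) (j | j)
    · simp only [DihedralGroup.r_mul_r, pow_val_add hρ]
    · simp only [DihedralGroup.r_mul_sr, sub_eq_neg_add, pow_val_add hρ, ← mul_assoc,
        pow_val_mul hρ hρσ]
    · simp only [DihedralGroup.sr_mul_r, pow_val_add hρ, mul_assoc]
    · simp only [DihedralGroup.sr_mul_sr, sub_eq_neg_add, pow_val_add hρ]
      rw [mul_assoc, ← mul_assoc (ρ ^ _), pow_val_mul hρ hρσ, mul_assoc, ← mul_assoc, hσ, one_mul]

end Lift

section GroupAlgebra

variable {R : Type*} [CommRing R] {n : ℕ}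

theorem aeval_r_eq_zero_of_X_pow_sub_one_dvd {f : R[X]} (hf : X ^ n - 1 ∣ f) :
    aeval (MonoidAlgebra.of R (DihedralGroup n) (.r 1)) f = 0 := by
  obtain ⟨g, rfl⟩ := hf
  have : MonoidAlgebra.of R (DihedralGroup n) (.r 1) ^ n = 1 := by
    rw [← map_pow, DihedralGroup.r_one_pow_n, map_one]
  rw [map_mul, map_sub, map_pow, aeval_X, map_one, this, sub_self, zero_mul]

variable [NeZero n]

theorem exists_eq_aeval_r_add_sr_mul_aeval_r (x : MonoidAlgebra R (DihedralGroup n)) :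
    ∃ f g : R[X], x = aeval (MonoidAlgebra.of R _ (.r 1)) f +
      MonoidAlgebra.of R _ (.sr 0) * aeval (MonoidAlgebra.of R _ (.r 1)) g := by
  induction x using MonoidAlgebra.induction_linear with
  | zero => exact ⟨0, 0, by simp⟩
  | add x y hx hy =>
    obtain ⟨f₁, g₁, rfl⟩ := hx
    obtain ⟨f₂, g₂, rfl⟩ := hy
    exact ⟨f₁ + f₂, g₁ + g₂, by simp only [map_add, mul_add]; abel⟩
  | single d c =>
    rcases d with i | i
    · exact ⟨monomial i.val c, 0, by simp⟩
    · exact ⟨0, monomial i.val c, by simp⟩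

variable {B : Type*} [Ring B] [Algebra R B] {ρ σ : B} (hρ : ρ ^ n = 1) (hσ : σ * σ = 1)
  (hρσ : ρ * σ * ρ = σ)

variable (R) in
/-- The linear extension of `dihedralLift` to the group algebra. -/
noncomputable def dihedralAlgLift : MonoidAlgebra R (DihedralGroup n) →ₐ[R] B :=
  MonoidAlgebra.lift R B _ (dihedralLift ρ σ hρ hσ hρσ)

theorem dihedralAlgLift_aeval_add_mul_aeval (f g : R[X]) :
    dihedralAlgLift R hρ hσ hρσ (aeval (MonoidAlgebra.of R _ (.r 1)) f +
      MonoidAlgebra.of R _ (.sr 0) * aeval (MonoidAlgebra.of R _ (.r 1)) g) =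
      aeval ρ f + σ * aeval ρ g := by
  have map_r : dihedralAlgLift R hρ hσ hρσ (MonoidAlgebra.of R _ (.r 1)) = ρ := by
    simp [dihedralAlgLift, dihedralLift, ZMod.val_one_eq_one_mod, ← pow_eq_pow_mod _ hρ]
  have map_sr : dihedralAlgLift R hρ hσ hρσ (MonoidAlgebra.of R _ (.sr 0)) = σ := by
    simp [dihedralAlgLift, dihedralLift]
  rw [map_add, map_mul, ← aeval_algHom_apply, ← aeval_algHom_apply, map_r, map_sr]

end GroupAlgebra

section PrimeDihedral

theorem X_pow_sub_one_dvd_of_aeval_eq_zero {F L : Type*} [Field F] [Field L] [Algebra F L] {ℓ : ℕ}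
    [Fact ℓ.Prime] (hΦ : Irreducible (cyclotomic ℓ F)) {ζ : L} (hζ : IsPrimitiveRoot ζ ℓ)
    {f : F[X]} (hf₁ : f.IsRoot 1) (hfζ : aeval ζ f = 0) : X ^ ℓ - 1 ∣ f := by
  have hℓ : (ℓ : F) ≠ 0 := by
    rw [← map_ne_zero (algebraMap F L), map_natCast]
    exact hζ.neZero'.ne
  have minpoly_eq : cyclotomic ℓ F = minpoly F ζ := by
    refine minpoly.eq_of_irreducible_of_monic hΦ ?_ (cyclotomic.monic ℓ F)
    rw [← eval_map_algebraMap, map_cyclotomic]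
    exact hζ.isRoot_cyclotomic (Fact.out : ℓ.Prime).pos
  obtain ⟨h, rfl⟩ : cyclotomic ℓ F ∣ f := minpoly_eq ▸ minpoly.dvd F ζ hfζ
  have hh : h.IsRoot 1 := by
    simpa [IsRoot.def, eval_one_cyclotomic_prime, hℓ] using hf₁
  rw [← cyclotomic_prime_mul_X_sub_one]
  exact mul_dvd_mul_left _ (by simpa using dvd_iff_isRoot.mpr hh)

variable {F K L : Type*} [Field F] [Field K] [Field L] [Algebra F K] [Algebra F L]
  [Algebra K L] [IsScalarTower F K L] {ℓ : ℕ} {ζ : L} (hζ : IsPrimitiveRoot ζ ℓ)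
  {τ : L ≃ₐ[K] L} (hτ : τ * τ = 1) (hτζ : τ ζ = ζ⁻¹)

variable (F) in
/-- The action of `F[D_ℓ]` on `L`, the rotation `r 1` acting by multiplication by `ζ` and the
reflection `sr 0` by the automorphism `τ`. -/
noncomputable def cyclotomicRep [NeZero ℓ] :
    MonoidAlgebra F (DihedralGroup ℓ) →ₐ[F] Module.End K L :=
  dihedralAlgLift F (ρ := Algebra.lmul K L ζ) (σ := τ.toLinearMap)
    (by rw [← map_pow, hζ.pow_eq_one, map_one])
    (LinearMap.ext fun x ↦ DFunLike.congr_fun hτ x)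
    (LinearMap.ext fun x ↦ by simp [hτζ, hζ.ne_zero (NeZero.ne ℓ)])

variable (F) in
/-- The map from `F[D_ℓ]` to the product of its Wedderburn components: the trivial character, the
sign character `r i ↦ 1`, `sr i ↦ -1`, and `cyclotomicRep`. -/
noncomputable def dihedralWedderburnHom [NeZero ℓ] :
    MonoidAlgebra F (DihedralGroup ℓ) →ₐ[F] F × F × Module.End K L :=
  (dihedralAlgLift F (ρ := 1) (σ := 1) (one_pow ℓ) (one_mul 1) (by simp)).prod <|
  (dihedralAlgLift F (ρ := 1) (σ := -1) (one_pow ℓ) (by simp) (by simp)).prod <|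
  cyclotomicRep F hζ hτ hτζ

theorem eq_zero_of_lmul_add_mul_lmul_eq_zero {τ : L ≃ₐ[K] L} (hτ : τ ≠ 1) {u v : L}
    (h : Algebra.lmul K L u + τ.toLinearMap * Algebra.lmul K L v = 0) : u = 0 ∧ v = 0 := by
  obtain ⟨y, hy⟩ : ∃ y, τ y ≠ y := by
    by_contra! h
    exact hτ (AlgEquiv.ext h)
  have apply_eq_zero (x : L) : u * x + τ v * τ x = 0 := by
    simpa using LinearMap.congr_fun h x
  have h₁ : u + τ v = 0 := by simpa using apply_eq_zero 1
  have hv : τ v = 0 := by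
    refine (mul_eq_zero.mp ?_).resolve_right (sub_ne_zero.mpr hy)
    linear_combination apply_eq_zero y - y * h₁
  exact ⟨by simpa [hv] using h₁, by simpa using hv⟩

theorem aeval_lmul (z : L) (f : F[X]) :
    aeval (Algebra.lmul K L z) f = Algebra.lmul K L (aeval z f) :=
  aeval_algHom_apply ((Algebra.lmul K L).restrictScalars F) z f

theorem dihedralWedderburnHom_injective [Fact ℓ.Prime] (hF : (2 : F) ≠ 0) (hτ₁ : τ ≠ 1)
    (hΦ : Irreducible (cyclotomic ℓ F)) :
    Function.Injective (dihedralWedderburnHom F hζ hτ hτζ) := by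
  rw [injective_iff_map_eq_zero]
  intro x hx
  obtain ⟨f, g, rfl⟩ := exists_eq_aeval_r_add_sr_mul_aeval_r x
  simp only [dihedralWedderburnHom, cyclotomicRep, AlgHom.prod_apply, Prod.mk_eq_zero,
    dihedralAlgLift_aeval_add_mul_aeval, aeval_lmul] at hx
  obtain ⟨trivial_eq, sign_eq, rep_eq⟩ := hx
  have hf₁ : f.IsRoot 1 := by
    refine (mul_eq_zero.mp ?_).resolve_left hF
    rw [← coe_aeval_eq_eval]
    linear_combination trivial_eq + sign_eq
  have hg₁ : g.IsRoot 1 := by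
    simpa [coe_aeval_eq_eval, hf₁.eq_zero] using trivial_eq
  obtain ⟨hfζ, hgζ⟩ := eq_zero_of_lmul_add_mul_lmul_eq_zero hτ₁ rep_eq
  have hf := X_pow_sub_one_dvd_of_aeval_eq_zero hΦ hζ hf₁ hfζ
  have hg := X_pow_sub_one_dvd_of_aeval_eq_zero hΦ hζ hg₁ hgζ
  rw [aeval_r_eq_zero_of_X_pow_sub_one_dvd hf, aeval_r_eq_zero_of_X_pow_sub_one_dvd hg, mul_zero,
    add_zero]

theorem dihedralWedderburnHom_bijective [Fact ℓ.Prime] (hF : (2 : F) ≠ 0) (hτ₁ : τ ≠ 1)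
    (hΦ : Irreducible (cyclotomic ℓ F)) (hFK : 2 * Module.finrank F K = ℓ - 1)
    (hKL : Module.finrank K L = 2) : Function.Bijective (dihedralWedderburnHom F hζ hτ hτζ) := by
  have two_le := (Fact.out : ℓ.Prime).two_le
  have : Module.Finite F K := Module.finite_of_finrank_pos (by omega)
  have : Module.Finite K L := Module.finite_of_finrank_pos (by omega)
  refine bijective_of_injective_of_finrank_eq_natCard
    (dihedralWedderburnHom_injective hζ hτ hτζ hF hτ₁ hΦ) ?_
  have : Module.Finite F (Module.End K L) := .trans K _
  rw [Module.finrank_prod, Module.finrank_prod, Module.finrank_self,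
    ← Module.finrank_mul_finrank F K (Module.End K L), Module.finrank_linearMap, hKL,
    DihedralGroup.nat_card]
  omega

theorem nonempty_dihedral_algEquiv [Fact ℓ.Prime] {ζ : L} (hζ : IsPrimitiveRoot ζ ℓ)
    {τ : L ≃ₐ[K] L} (hτ : τ * τ = 1) (hτζ : τ ζ = ζ⁻¹) (hF : (2 : F) ≠ 0) (hτ₁ : τ ≠ 1)
    (hΦ : Irreducible (cyclotomic ℓ F)) (hFK : 2 * Module.finrank F K = ℓ - 1)
    (hKL : Module.finrank K L = 2) :
    Nonempty (MonoidAlgebra F (DihedralGroup ℓ) ≃ₐ[F] F × F × Matrix (Fin 2) (Fin 2) K) := by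
  have : Module.Finite K L := Module.finite_of_finrank_pos (by omega)
  let endEquiv : Module.End K L ≃ₐ[K] Matrix (Fin 2) (Fin 2) K :=
    algEquivMatrix (Module.finBasisOfFinrankEq K L hKL)
  let wedderburnEquiv := AlgEquiv.ofBijective _
    (dihedralWedderburnHom_bijective hζ hτ hτζ hF hτ₁ hΦ hFK hKL)
  exact ⟨wedderburnEquiv.trans <| .prodCongr .refl <| .prodCongr .refl <|
    endEquiv.restrictScalars F⟩

end PrimeDihedral

end Dihedral

section FiniteField

theorem hasEnoughRootsOfUnity_of_dvd_card_sub_one {F : Type*} [Field F] [Fintype F] {n : ℕ}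
    (hn : n ∣ Fintype.card F - 1) : HasEnoughRootsOfUnity F n := by
  classical
  obtain ⟨u, hu⟩ := IsCyclic.exists_ofOrder_eq_natCard (α := Fˣ)
  rw [Nat.card_eq_fintype_card, Fintype.card_units] at hu
  have : NeZero (Fintype.card F - 1) := ⟨by have := Fintype.one_lt_card (α := F); omega⟩
  have : HasEnoughRootsOfUnity F (Fintype.card F - 1) :=
    { prim := ⟨u, IsPrimitiveRoot.coe_units_iff.mpr (hu ▸ .orderOf u)⟩
      cyc := inferInstance }
  exact .of_dvd F hn

theorem exists_isPrimitiveRoot_frobenius_eq_inv {K L : Type*} [Field K] [Fintype K] [Field L]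
    [Finite L] [Algebra K L] (hKL : Module.finrank K L = 2) {n : ℕ} (hn : n ∣ Fintype.card K + 1) :
    ∃ ζ : L, IsPrimitiveRoot ζ n ∧ FiniteField.frobeniusAlgEquivOfAlgebraic K L ζ = ζ⁻¹ := by
  have := Fintype.ofFinite L
  have dvd_card_L : n ∣ Fintype.card L - 1 := by
    rw [Module.card_eq_pow_finrank (K := K) (V := L), hKL, ← one_pow 2, Nat.sq_sub_sq]
    exact hn.mul_right _
  obtain ⟨ζ, hζ⟩ := (hasEnoughRootsOfUnity_of_dvd_card_sub_one dvd_card_L).prim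
  refine ⟨ζ, hζ, eq_inv_of_mul_eq_one_left ?_⟩
  rw [FiniteField.coe_frobeniusAlgEquivOfAlgebraic, ← pow_succ]
  exact (hζ.pow_eq_one_iff_dvd _).mpr hn

variable {F : Type*} [Field F] [Fintype F] {ℓ : ℕ} [Fact ℓ.Prime]

theorem irreducible_cyclotomic_of_orderOf_card (hF : orderOf (Fintype.card F : ZMod ℓ) = ℓ - 1) :
    Irreducible (cyclotomic ℓ F) := by
  have hℓ := (Fact.out : ℓ.Prime)
  obtain ⟨p, _, f, hp, hcard⟩ := FiniteField.card' F
  have : Fact p.Prime := ⟨hp⟩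
  have coprime : p.Coprime ℓ := by
    rw [Nat.coprime_primes hp hℓ]
    rintro rfl
    have := hℓ.two_le
    rw [hcard, Nat.cast_pow, ZMod.natCast_self, zero_pow f.ne_zero, orderOf_zero] at hF
    omega
  refine irreducible_of_dvd_cyclotomic_of_natDegree hcard coprime dvd_rfl ?_
  rw [natDegree_cyclotomic, Nat.totient_prime hℓ, ← hF, ← orderOf_units,
    ZMod.coe_unitOfCoprime, hcard]

theorem dvd_card_add_one_of_orderOf_card {K : Type*} [Field K] [Fintype K] [Algebra F K]
    (hF : orderOf (Fintype.card F : ZMod ℓ) = ℓ - 1) (hFK : 2 * Module.finrank F K = ℓ - 1) :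
    ℓ ∣ Fintype.card K + 1 := by
  have := (Fact.out : ℓ.Prime).two_le
  have card_pow_eq : (Fintype.card F : ZMod ℓ) ^ Module.finrank F K = -1 := by
    refine IsPrimitiveRoot.eq_neg_one_of_two_right ?_
    exact (IsPrimitiveRoot.orderOf _).pow (by omega) (by omega)
  rw [← ZMod.natCast_eq_zero_iff, Module.card_eq_pow_finrank (K := F) (V := K)]
  push_cast
  rw [card_pow_eq, neg_add_cancel]

theorem nonempty_dihedral_algEquiv_of_orderOf_card {K : Type*} [Field K] [Algebra F K]
    (h₂ : (2 : F) ≠ 0) (hF : orderOf (Fintype.card F : ZMod ℓ) = ℓ - 1)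
    (hFK : 2 * Module.finrank F K = ℓ - 1) :
    Nonempty (MonoidAlgebra F (DihedralGroup ℓ) ≃ₐ[F] F × F × Matrix (Fin 2) (Fin 2) K) := by
  have two_le := (Fact.out : ℓ.Prime).two_le
  have : Module.Finite F K := Module.finite_of_finrank_pos (by omega)
  have : Finite K := Module.finite_of_finite F
  have := Fintype.ofFinite K
  obtain ⟨p, _⟩ := CharP.exists K
  have : Fact p.Prime := ⟨CharP.char_is_prime K p⟩
  let L := FiniteField.Extension K p 2
  let _ : Algebra F L := ((algebraMap K L).comp (algebraMap F K)).toAlgebra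
  have : IsScalarTower F K L := .of_algebraMap_eq fun _ ↦ rfl
  have hKL : Module.finrank K L = 2 := FiniteField.finrank_extension K p 2
  obtain ⟨ζ, hζ, frob_ζ⟩ :=
    exists_isPrimitiveRoot_frobenius_eq_inv hKL (dvd_card_add_one_of_orderOf_card hF hFK)
  have orderOf_frob : orderOf (FiniteField.frobeniusAlgEquivOfAlgebraic K L) = 2 := by
    rw [FiniteField.orderOf_frobeniusAlgEquivOfAlgebraic, hKL]
  have frob_mul_frob : FiniteField.frobeniusAlgEquivOfAlgebraic K L *
      FiniteField.frobeniusAlgEquivOfAlgebraic K L = 1 := by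
    rw [← pow_two]
    exact orderOf_dvd_iff_pow_eq_one.mp orderOf_frob.dvd
  have frob_ne_one : FiniteField.frobeniusAlgEquivOfAlgebraic K L ≠ 1 := by
    rw [Ne, ← orderOf_eq_one_iff, orderOf_frob]
    decide
  exact nonempty_dihedral_algEquiv hζ frob_mul_frob frob_ζ h₂ frob_ne_one
    (irreducible_cyclotomic_of_orderOf_card hF) hFK hKL

end FiniteField

section UnitGroup

theorem nonempty_units_mulEquiv_zmod (F : Type*) [Field F] [Fintype F] :
    Nonempty (Fˣ ≃* Multiplicative (ZMod (Fintype.card F - 1))) := by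
  classical
  refine ⟨mulEquivOfCyclicCardEq ?_⟩
  rw [Nat.card_eq_fintype_card, Fintype.card_units, Nat.card_congr Multiplicative.toAdd,
    Nat.card_zmod]

theorem nonempty_units_mulEquiv_of_algEquiv {F B K ι κ n : Type*} [Field F] [Fintype F] [Ring B]
    [Algebra F B] [CommRing K] [Algebra F K] [Fintype n] [DecidableEq n]
    (e : B ≃ₐ[F] (ι → F) × (κ → Matrix n n K)) :
    Nonempty (Bˣ ≃* (ι → Multiplicative (ZMod (Fintype.card F - 1))) × (κ → GL n K)) := by
  obtain ⟨unitsEquiv⟩ := nonempty_units_mulEquiv_zmod F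
  exact ⟨(Units.mapEquiv e.toMulEquiv).trans <| MulEquiv.prodUnits.trans <|
    .prodCongr (MulEquiv.piUnits.trans <| .piCongrRight fun _ ↦ unitsEquiv) MulEquiv.piUnits⟩

end UnitGroup

section ProdDihedral

/-- Gathers the `S`-factors of `(S × S × B)^ι` into a single power of `S`. -/
def piProdProdAlgEquiv (R ι S B : Type*) [CommSemiring R] [Semiring S] [Semiring B] [Algebra R S]
    [Algebra R B] : (ι → S × S × B) ≃ₐ[R] (ι ⊕ ι → S) × (ι → B) where
  toFun f := (Sum.elim (fun i ↦ (f i).1) (fun i ↦ (f i).2.1), fun i ↦ (f i).2.2)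
  invFun g i := (g.1 (.inl i), g.1 (.inr i), g.2 i)
  left_inv _ := rfl
  right_inv _ := Prod.ext (funext (Sum.rec (fun _ ↦ rfl) fun _ ↦ rfl)) rfl
  map_mul' _ _ := Prod.ext (funext (Sum.rec (fun _ ↦ rfl) fun _ ↦ rfl)) rfl
  map_add' _ _ := Prod.ext (funext (Sum.rec (fun _ ↦ rfl) fun _ ↦ rfl)) rfl
  commutes' _ := Prod.ext (funext (Sum.rec (fun _ ↦ rfl) fun _ ↦ rfl)) rfl

variable {F K A : Type*} [Field F] [Fintype F] [Field K] [Algebra F K] [CommGroup A] [Finite A]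
  {ℓ m : ℕ} [Fact ℓ.Prime]

theorem nonempty_prod_dihedral_algEquiv (h₂ : (2 : F) ≠ 0)
    (hA : Monoid.exponent A ∣ Fintype.card F - 1) (hm : Nat.card A = m)
    (hF : orderOf (Fintype.card F : ZMod ℓ) = ℓ - 1) (hFK : 2 * Module.finrank F K = ℓ - 1) :
    Nonempty (MonoidAlgebra F (A × DihedralGroup ℓ) ≃ₐ[F]
      (Fin (2 * m) → F) × (Fin m → Matrix (Fin 2) (Fin 2) K)) := by
  have := hasEnoughRootsOfUnity_of_dvd_card_sub_one hA
  have : Finite (A →* Fˣ) := (linearIndependent_characters F A).finite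
  have card_characters : Nat.card (A →* Fˣ) = m :=
    (CommGroup.card_monoidHom_of_hasEnoughRootsOfUnity A F).trans hm
  let e₁ : (A →* Fˣ) ≃ Fin m := Finite.equivFinOfCardEq card_characters
  let e₂ : (A →* Fˣ) ⊕ (A →* Fˣ) ≃ Fin (2 * m) :=
    Finite.equivFinOfCardEq (by rw [Nat.card_sum, card_characters, two_mul])
  obtain ⟨splitting⟩ := nonempty_prod_algEquiv_characters_pi F A (DihedralGroup ℓ)
  obtain ⟨wedderburn⟩ := nonempty_dihedral_algEquiv_of_orderOf_card h₂ hF hFK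
  exact ⟨splitting.trans <| (AlgEquiv.piCongrRight fun _ ↦ wedderburn).trans <|
    (piProdProdAlgEquiv F _ F _).trans <|
    .prodCongr (.piCongrLeft F (fun _ ↦ F) e₂)
      (.piCongrLeft F (fun _ ↦ Matrix (Fin 2) (Fin 2) K) e₁)⟩

theorem stmt_18_general (h₂ : (2 : F) ≠ 0) (hA : Monoid.exponent A ∣ Fintype.card F - 1)
    (hm : Nat.card A = m) (hF : orderOf (Fintype.card F : ZMod ℓ) = ℓ - 1)
    (hFK : 2 * Module.finrank F K = ℓ - 1) :
    Nonempty (MonoidAlgebra F (A × DihedralGroup ℓ) ≃ₐ[F]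
      (Fin (2 * m) → F) × (Fin m → Matrix (Fin 2) (Fin 2) K)) ∧
    Nonempty ((MonoidAlgebra F (A × DihedralGroup ℓ))ˣ ≃*
      (Fin (2 * m) → Multiplicative (ZMod (Fintype.card F - 1))) × (Fin m → GL (Fin 2) K)) := by
  obtain ⟨e⟩ := nonempty_prod_dihedral_algEquiv h₂ hA hm hF hFK
  exact ⟨⟨e⟩, nonempty_units_mulEquiv_of_algEquiv e⟩

end ProdDihedral

theorem orderOf_natCast_zmod_five {q : ℕ} (hq : q % 5 = 2 ∨ q % 5 = 3) :
    orderOf (q : ZMod 5) = 4 := by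
  rw [← ZMod.natCast_mod]
  refine orderOf_eq_prime_pow (p := 2) (n := 1) ?_ ?_ <;> rcases hq with h | h <;> rw [h] <;> decide

/-- For `F` a finite field of characteristic `p > 5` with `q ≡ 7, 13 (mod 30)`,
`F₂` the quadratic extension of `F`, and `G = C₃ × D₁₀`:
`FG ≅ F⁶ ⊕ M₂(F₂)³` as `F`-algebras, and consequently
`U(FG) ≅ C_{q-1}⁶ × GL(2,F₂)³`. -/
theorem stmt_18 (F : Type) [Field F] [Fintype F] (p : ℕ) (hchar : CharP F p) (hp : 5 < p)
    (hq : Fintype.card F % 30 = 7 ∨ Fintype.card F % 30 = 13)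
    (K : Type) [Field K] [Algebra F K] (hK : Module.finrank F K = 2) :
    let G := Multiplicative (ZMod 3) × DihedralGroup 5
    let q := Fintype.card F
    Nonempty (MonoidAlgebra F G ≃ₐ[F]
      ((Fin 6 → F) × (Fin 3 → Matrix (Fin 2) (Fin 2) K))) ∧
    Nonempty ((MonoidAlgebra F G)ˣ ≃*
      ((Fin 6 → Multiplicative (ZMod (q - 1))) × (Fin 3 → GL (Fin 2) K))) := by
  have : Fact (Nat.Prime 5) := ⟨by norm_num⟩
  have two_ne_zero : (2 : F) ≠ 0 := Ring.two_ne_zero (by rw [ringChar.eq F p]; omega)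
  have card_C₃ : Nat.card (Multiplicative (ZMod 3)) = 3 := by simp
  have exponent_dvd : Monoid.exponent (Multiplicative (ZMod 3)) ∣ Fintype.card F - 1 :=
    Group.exponent_dvd_nat_card.trans (by rw [card_C₃]; omega)
  have orderOf_q : orderOf (Fintype.card F : ZMod 5) = 5 - 1 :=
    orderOf_natCast_zmod_five (by omega)
  exact stmt_18_general two_ne_zero exponent_dvd card_C₃ orderOf_q (by omega)
end
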